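/- arXiv:1301.0727 — 3 statements merged into one kernel-verified Lean document; each statement's English description precedes it below -/
import Mathlib

section
/- Fix a ∈ ℝ. There exists a solution (Φ, W, Ψ, θ) of system (D) defined for all τ ∈ ℝ, with Φ(τ) > 0 and θ(τ) ∈ [−π/2, π/2] for all τ, such that (Φ(τ), W(τ), Ψ(τ), θ(τ)) → (1, 0, 0, π/2) as τ → +∞ and (Φ(τ), W(τ), Ψ(τ), θ(τ)) → (1, 0, 0, −π/2) as τ → −∞ (a heteroclinic connection from p₋ to p₊). -/
/-!
With `x = tan θ` and `Φ = (1 + x²)^(1/3) H(x)`, system (D) becomes the single equation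
`H''' = 1 / H³ - (x² + a)` on the whole line, and a heteroclinic connection is a positive solution
`H` that stays close to the profile `(1 + x²)^(-1/3)` at both ends. Write `H = h + u`, where `h`
solves the equation up to an error of order `1 / (1 + x²)`, and truncate the singularity of `1 / H³`
at `H = k h` for a small constant `k`. The equation for `u` is then dissipative: the energy
`u u'' - u'² / 2` has derivative `u u'''`, which is bounded above by an integrable function and is
very negative wherever `u` is large. Shooting on bounded intervals and compactness give a solution
on the whole line with bounded energy, and integrating the equation against test polynomials on
windows of length comparable to `(1 + x²)^(-4/9)` turns the energy bound into pointwise bounds.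
Entering the truncated region would cost more energy than is available once `k` is small, so `H`
solves the original equation.
-/

open Filter Real

/-- The right-hand side of the `Ψ` equation in system (D). -/
noncomputable def dPsi (a Φ W Ψ θ : ℝ) : ℝ :=
  1 / Φ ^ 3 - 1 - (a - 1) * Real.cos θ ^ 2 -
    (((16 / 3) * Real.sin θ - (224 / 27) * Real.sin θ ^ 3) * Real.cos θ ^ ((17 : ℝ) / 3) * Φ
      + ((208 / 81) * Real.sin θ ^ 2 - 10 / 9) * Real.cos θ ^ ((34 : ℝ) / 9) * W
      + (2 / 3) * Real.sin θ * Real.cos θ ^ ((17 : ℝ) / 9) * Ψ)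

/-- `(Φ, W, Ψ, θ)` is a solution of system (D) on all of `ℝ`. -/
noncomputable def SolD (a : ℝ) (Φ W Ψ θ : ℝ → ℝ) : Prop :=
  ∀ τ : ℝ,
    HasDerivAt Φ (W τ) τ ∧
    HasDerivAt W (Ψ τ) τ ∧
    HasDerivAt Ψ (dPsi a (Φ τ) (W τ) (Ψ τ) (θ τ)) τ ∧
    HasDerivAt θ (Real.cos (θ τ) ^ ((26 : ℝ) / 9)) τ

/-! ### Globally Lipschitz differential equations -/

section GlobalFlow

open scoped NNReal

variable {E : Type*} [NormedAddCommGroup E] [NormedSpace ℝ E]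
  {v : ℝ → E → E} {γ γ' : ℝ → E} {s s' : Set ℝ} {K : ℝ≥0} {a b c t₀ : ℝ}

lemma isIntegralCurveOn_of_eqOn (h : IsIntegralCurveOn γ v s) (heq : Set.EqOn γ' γ s) :
    IsIntegralCurveOn γ' v s :=
  fun t ht ↦ by simpa only [heq ht] using (h t ht).congr heq (heq ht)

lemma isIntegralCurveOn_union (h : IsIntegralCurveOn γ v s) (h' : IsIntegralCurveOn γ v s')
    (hs : IsClosed s) (hs' : IsClosed s') : IsIntegralCurveOn γ v (s ∪ s') := by
  have hasDerivWithinAt {r : Set ℝ} (hγ : IsIntegralCurveOn γ v r) (hr : IsClosed r) (t : ℝ) :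
      HasDerivWithinAt γ (v t (γ t)) r t := by
    by_cases ht : t ∈ r
    · exact hγ t ht
    · exact HasFDerivWithinAt.of_notMem_closure (by rwa [hr.closure_eq])
  exact fun t _ ↦ (hasDerivWithinAt h hs t).union (hasDerivWithinAt h' hs' t)

lemma exists_isIntegralCurveOn_Icc_trans (hab : a ≤ b) (hbc : b ≤ c)
    (h : IsIntegralCurveOn γ v (Set.Icc a b)) (h' : IsIntegralCurveOn γ' v (Set.Icc b c))
    (heq : γ b = γ' b) :
    ∃ σ : ℝ → E, Set.EqOn σ γ (Set.Icc a b) ∧ Set.EqOn σ γ' (Set.Icc b c) ∧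
      IsIntegralCurveOn σ v (Set.Icc a c) := by
  let σ : ℝ → E := fun t ↦ if t ≤ b then γ t else γ' t
  have hσ : Set.EqOn σ γ (Set.Icc a b) := fun t ht ↦ if_pos ht.2
  have hσ' : Set.EqOn σ γ' (Set.Icc b c) := by
    intro t ht
    rcases ht.1.eq_or_lt with rfl | hlt
    · exact (if_pos le_rfl).trans heq
    · exact if_neg hlt.not_ge
  refine ⟨σ, hσ, hσ', ?_⟩
  rw [← Set.Icc_union_Icc_eq_Icc hab hbc]
  exact isIntegralCurveOn_union (isIntegralCurveOn_of_eqOn h hσ) (isIntegralCurveOn_of_eqOn h' hσ')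
    isClosed_Icc isClosed_Icc

/-- Every initial value problem `γ' = v t γ`, `γ t₀ = x` with `t₀ ∈ [a, b]` has a solution on
`[a, b]`. -/
def IsSolvableOn (v : ℝ → E → E) (a b : ℝ) : Prop :=
  ∀ t₀ ∈ Set.Icc a b, ∀ x, ∃ γ : ℝ → E, γ t₀ = x ∧ IsIntegralCurveOn γ v (Set.Icc a b)

lemma IsSolvableOn.trans (hl : IsSolvableOn v a b) (hr : IsSolvableOn v b c) (hab : a ≤ b)
    (hbc : b ≤ c) : IsSolvableOn v a c := by
  intro t₀ ht₀ x
  rcases le_total t₀ b with htb | hbt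
  · obtain ⟨γ, hγx, hγ⟩ := hl t₀ ⟨ht₀.1, htb⟩ x
    obtain ⟨γ', hγ'b, hγ'⟩ := hr b ⟨le_rfl, hbc⟩ (γ b)
    obtain ⟨σ, hσ, -, hσv⟩ := exists_isIntegralCurveOn_Icc_trans hab hbc hγ hγ' hγ'b.symm
    exact ⟨σ, (hσ ⟨ht₀.1, htb⟩).trans hγx, hσv⟩
  · obtain ⟨γ', hγ'x, hγ'⟩ := hr t₀ ⟨hbt, ht₀.2⟩ x
    obtain ⟨γ, hγb, hγ⟩ := hl b ⟨hab, le_rfl⟩ (γ' b)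
    obtain ⟨σ, -, hσ, hσv⟩ := exists_isIntegralCurveOn_Icc_trans hab hbc hγ hγ' hγb
    exact ⟨σ, (hσ ⟨hbt, ht₀.2⟩).trans hγ'x, hσv⟩

lemma hasDerivAt_of_isIntegralCurveOn_Icc {t : ℝ} (h : IsIntegralCurveOn γ v (Set.Icc a b))
    (ht : t ∈ Set.Ioo a b) : HasDerivAt γ (v t (γ t)) t :=
  (h t (Set.Ioo_subset_Icc_self ht)).hasDerivAt (Icc_mem_nhds ht.1 ht.2)

lemma dist_le_of_isIntegralCurve_of_le (hlip : ∀ t ∈ Set.Icc a b, LipschitzWith K (v t))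
    (hγ : IsIntegralCurve γ v) (hγ' : IsIntegralCurve γ' v) (hab : a ≤ b) :
    dist (γ b) (γ' b) ≤ dist (γ a) (γ' a) * exp (K * (b - a)) :=
  dist_le_of_trajectories_ODE_of_mem (s := fun _ ↦ Set.univ)
    (fun t ht ↦ (hlip t (Set.Ico_subset_Icc_self ht)).lipschitzOnWith)
    hγ.continuous.continuousOn (fun t _ ↦ (hγ t).hasDerivWithinAt) (fun _ _ ↦ Set.mem_univ _)
    hγ'.continuous.continuousOn (fun t _ ↦ (hγ' t).hasDerivWithinAt) (fun _ _ ↦ Set.mem_univ _)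
    le_rfl b ⟨hab, le_rfl⟩

lemma dist_le_of_isIntegralCurve (hlip : ∀ t ∈ Set.uIcc a b, LipschitzWith K (v t))
    (hγ : IsIntegralCurve γ v) (hγ' : IsIntegralCurve γ' v) :
    dist (γ b) (γ' b) ≤ dist (γ a) (γ' a) * exp (K * |b - a|) := by
  rcases le_total a b with hab | hba
  · rw [Set.uIcc_of_le hab] at hlip
    rw [abs_of_nonneg (sub_nonneg.2 hab)]
    exact dist_le_of_isIntegralCurve_of_le hlip hγ hγ' hab
  · rw [Set.uIcc_of_ge hba] at hlip
    have hlip_rev : ∀ t ∈ Set.Icc (-a) (-b), LipschitzWith K (((-1 : ℝ) • v ∘ (· * (-1))) t) := by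
      intro t ht
      have hmem : t * -1 ∈ Set.Icc b a := ⟨by linarith [ht.2], by linarith [ht.1]⟩
      refine LipschitzWith.of_dist_le_mul fun x y ↦ ?_
      simpa using (hlip _ hmem).dist_le_mul x y
    simpa [abs_of_nonpos (sub_nonpos.2 hba), neg_add_eq_sub] using
      dist_le_of_isIntegralCurve_of_le hlip_rev (hγ.comp_mul (-1)) (hγ'.comp_mul (-1))
        (neg_le_neg hba)

lemma isIntegralCurve_eq (hlip : ∀ T : ℝ, ∃ K : ℝ≥0, ∀ t ∈ Set.Icc (-T) T, LipschitzWith K (v t))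
    (hγ : IsIntegralCurve γ v) (hγ' : IsIntegralCurve γ' v) (h : γ t₀ = γ' t₀) : γ = γ' := by
  ext t
  obtain ⟨K, hK⟩ := hlip (max |t₀| |t|)
  have hsub : Set.uIcc t₀ t ⊆ Set.Icc (-max |t₀| |t|) (max |t₀| |t|) :=
    Set.uIcc_subset_Icc (abs_le.1 (le_max_left _ _)) (abs_le.1 (le_max_right _ _))
  simpa [h] using dist_le_of_isIntegralCurve (fun s hs ↦ hK s (hsub hs)) hγ hγ'

variable [CompleteSpace E]

lemma isSolvableOn_of_short (hcont : ∀ x, ContinuousOn (v · x) (Set.Icc a b))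
    (hlip : ∀ t ∈ Set.Icc a b, LipschitzWith K (v t)) (hshort : 2 * K * (b - a) ≤ 1) :
    IsSolvableOn v a b := by
  intro t₀ ht₀ x
  obtain ⟨M, hM⟩ := (isCompact_Icc (a := a) (b := b)).exists_bound_of_continuousOn (hcont x)
  have hM₀ : 0 ≤ M := (norm_nonneg _).trans (hM t₀ ht₀)
  have hab : 0 ≤ b - a := sub_nonneg.2 (ht₀.1.trans ht₀.2)
  -- On the ball of radius `R = 2M(b - a)` the field is bounded by `KR + M`, and a solution
  -- moving at that speed stays in the ball because `2K(b - a) ≤ 1`.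
  let R : ℝ≥0 := ⟨2 * M * (b - a), by positivity⟩
  have hpl : IsPicardLindelof v ⟨t₀, ht₀⟩ x R 0 (K * R + ⟨M, hM₀⟩) K :=
    { lipschitzOnWith := fun t ht ↦ (hlip t ht).lipschitzOnWith
      continuousOn := fun y _ ↦ hcont y
      norm_le := by
        intro t ht y hy
        calc ‖v t y‖ ≤ ‖v t y - v t x‖ + ‖v t x‖ := norm_le_norm_sub_add _ _
          _ ≤ K * R + M := by
            gcongr
            · rw [← dist_eq_norm]
              exact ((hlip t ht).dist_le_mul y x).trans (by gcongr; exact hy)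
            · exact hM t ht
      mul_max_le := by
        have hmax : max (b - t₀) (t₀ - a) ≤ b - a :=
          max_le (by linarith [ht₀.1]) (by linarith [ht₀.2])
        have hspeed : (K * (2 * M * (b - a)) + M) * (b - a) ≤ 2 * M * (b - a) := by
          nlinarith [mul_nonneg hM₀ hab]
        simp only [NNReal.coe_zero, sub_zero]
        exact (mul_le_mul_of_nonneg_left hmax (by positivity)).trans hspeed }
  exact hpl.exists_eq_forall_mem_Icc_hasDerivWithinAt₀

lemma isSolvableOn_of_lipschitzWith (hab : a ≤ b)
    (hcont : ∀ x, ContinuousOn (v · x) (Set.Icc a b))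
    (hlip : ∀ t ∈ Set.Icc a b, LipschitzWith K (v t)) : IsSolvableOn v a b := by
  obtain ⟨n, hn⟩ := exists_nat_gt (2 * K * (b - a))
  have hn₀ : (0 : ℝ) < n := lt_of_le_of_lt (by have := sub_nonneg.2 hab; positivity) hn
  set δ : ℝ := (b - a) / n with hδ
  have hδ₀ : 0 ≤ δ := div_nonneg (sub_nonneg.2 hab) hn₀.le
  have hnδ : a + n * δ = b := by rw [hδ]; field_simp; ring
  have hshort : 2 * K * δ ≤ 1 := by
    rw [hδ, ← mul_div_assoc, div_le_one hn₀]
    exact hn.le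
  have solvable_short (c d : ℝ) (hc : a ≤ c) (hd : d ≤ b) (hcd : d - c ≤ δ) :
      IsSolvableOn v c d := by
    have hsub : Set.Icc c d ⊆ Set.Icc a b := Set.Icc_subset_Icc hc hd
    exact isSolvableOn_of_short (fun z ↦ (hcont z).mono hsub) (fun t ht ↦ hlip t (hsub ht))
      (hshort.trans' (by gcongr))
  suffices main : ∀ j : ℕ, j ≤ n → IsSolvableOn v a (a + j * δ) by
    simpa only [hnδ] using main n le_rfl
  intro j
  induction j with
  | zero => exact fun _ ↦ solvable_short _ _ le_rfl (by simpa using hab) (by simpa using hδ₀)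
  | succ j ih =>
    intro hj
    have hj' : (j : ℝ) + 1 ≤ n := by exact_mod_cast hj
    push_cast
    have hmid : a ≤ a + j * δ := by nlinarith [j.cast_nonneg (α := ℝ)]
    exact (ih (by omega)).trans (solvable_short _ _ hmid (by rw [← hnδ]; gcongr) (by linarith))
      hmid (by linarith)

lemma exists_isIntegralCurve_of_locally_lipschitzWith (hcont : ∀ x, Continuous (v · x))
    (hlip : ∀ T : ℝ, ∃ K : ℝ≥0, ∀ t ∈ Set.Icc (-T) T, LipschitzWith K (v t)) (t₀ : ℝ) (x : E) :
    ∃ γ : ℝ → E, γ t₀ = x ∧ IsIntegralCurve γ v := by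
  have solvable (n : ℕ) : ∃ γ : ℝ → E, γ t₀ = x ∧
      IsIntegralCurveOn γ v (Set.Icc (-(|t₀| + 1 + n)) (|t₀| + 1 + n)) := by
    obtain ⟨K, hK⟩ := hlip (|t₀| + 1 + n)
    have hle : |t₀| ≤ |t₀| + 1 + n := by linarith [n.cast_nonneg (α := ℝ)]
    exact isSolvableOn_of_lipschitzWith (by linarith [abs_nonneg t₀])
      (fun y ↦ (hcont y).continuousOn) hK t₀ (abs_le.1 hle) x
  choose γ hγx hγ using solvable
  have mem_Ioo {n : ℕ} {t : ℝ} (ht : |t| < n) :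
      t ∈ Set.Ioo (-(|t₀| + 1 + n)) (|t₀| + 1 + n) :=
    abs_lt.1 (by linarith [abs_nonneg t₀])
  have agree {m n : ℕ} (hmn : m ≤ n) {t : ℝ} (ht : |t| < m) : γ m t = γ n t := by
    obtain ⟨K, hK⟩ := hlip (|t₀| + 1 + m)
    have hmn' : (m : ℝ) ≤ n := by exact_mod_cast hmn
    have hsub : Set.Ioo (-(|t₀| + 1 + m)) (|t₀| + 1 + m) ⊆
        Set.Ioo (-(|t₀| + 1 + n)) (|t₀| + 1 + n) := Set.Ioo_subset_Ioo (by linarith) (by linarith)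
    refine ODE_solution_unique_of_mem_Ioo (s := fun _ ↦ Set.univ) (t₀ := t₀)
      (fun s hs ↦ (hK s (Set.Ioo_subset_Icc_self hs)).lipschitzOnWith)
      (abs_lt.1 (by linarith [m.cast_nonneg (α := ℝ)]))
      (fun s hs ↦ ⟨hasDerivAt_of_isIntegralCurveOn_Icc (hγ m) hs, Set.mem_univ _⟩)
      (fun s hs ↦ ⟨hasDerivAt_of_isIntegralCurveOn_Icc (hγ n) (hsub hs), Set.mem_univ _⟩)
      ((hγx m).trans (hγx n).symm) (mem_Ioo ht)
  let index (t : ℝ) : ℕ := ⌊|t|⌋₊ + 1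
  have lt_index (t : ℝ) : |t| < index t := by exact_mod_cast Nat.lt_floor_add_one |t|
  have eventually_eq (t : ℝ) : (fun s ↦ γ (index s) s) =ᶠ[nhds t] γ (index t + 1) := by
    filter_upwards [(continuous_abs.tendsto t).eventually_lt_const (lt_index t)] with s hs
    refine agree ?_ (lt_index s)
    exact Nat.add_le_add_right ((Nat.floor_lt (abs_nonneg s)).2 hs).le 1
  refine ⟨fun t ↦ γ (index t) t, hγx _, fun t ↦ ?_⟩
  beta_reduce
  rw [(eventually_eq t).eq_of_nhds]
  refine HasDerivAt.congr_of_eventuallyEq ?_ (eventually_eq t)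
  exact hasDerivAt_of_isIntegralCurveOn_Icc (hγ _) (mem_Ioo (by push_cast; linarith [lt_index t]))

theorem exists_continuous_global_flow (hcont : ∀ x, Continuous (v · x))
    (hlip : ∀ T : ℝ, ∃ K : ℝ≥0, ∀ t ∈ Set.Icc (-T) T, LipschitzWith K (v t)) (t₀ : ℝ) :
    ∃ S : E → ℝ → E, (∀ x, S x t₀ = x ∧ IsIntegralCurve (S x) v) ∧ ∀ t, Continuous (S · t) := by
  choose S hS using exists_isIntegralCurve_of_locally_lipschitzWith hcont hlip t₀
  refine ⟨S, hS, fun t ↦ ?_⟩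
  obtain ⟨K, hK⟩ := hlip (max |t₀| |t|)
  have hsub : Set.uIcc t₀ t ⊆ Set.Icc (-max |t₀| |t|) (max |t₀| |t|) :=
    Set.uIcc_subset_Icc (abs_le.1 (le_max_left _ _)) (abs_le.1 (le_max_right _ _))
  refine (LipschitzWith.of_dist_le' (K := exp (K * |t - t₀|)) fun x y ↦ ?_).continuous
  simpa only [(hS _).1, mul_comm] using
    dist_le_of_isIntegralCurve (fun s hs ↦ hK s (hsub hs)) (hS x).2 (hS y).2

end GlobalFlow

lemma surjective_of_forall_le_deriv {f f' : ℝ → ℝ} {m : ℝ} (hf : ∀ x, HasDerivAt f (f' x) x)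
    (hm : 0 < m) (hf' : ∀ x, m ≤ f' x) : Function.Surjective f := by
  have hmono : Monotone fun x ↦ f x - m * x := by
    have hderiv (x : ℝ) : HasDerivAt (fun x ↦ f x - m * x) (f' x - m) x := by
      simpa using (hf x).fun_sub ((hasDerivAt_id x).const_mul m)
    exact monotone_of_hasDerivAt_nonneg hderiv fun x ↦ sub_nonneg.2 (hf' x)
  have hcont : Continuous f := continuous_iff_continuousAt.2 fun x ↦ (hf x).continuousAt
  refine hcont.surjective ?_ ?_
  · refine tendsto_atTop_mono' _ ?_ (tendsto_atTop_add_const_left _ (f 0)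
      (tendsto_id.const_mul_atTop hm))
    filter_upwards [eventually_ge_atTop 0] with x hx
    simpa [le_sub_iff_add_le] using hmono hx
  · refine tendsto_atBot_mono' _ ?_ (tendsto_atBot_add_const_left _ (f 0)
      (tendsto_id.const_mul_atBot hm))
    filter_upwards [eventually_le_atBot 0] with x hx
    simpa [sub_le_iff_le_add] using hmono hx

lemma exists_hasDerivAt_comp_self_tendsto {f : ℝ → ℝ} {M : ℝ} (hf : Continuous f)
    (hpos : ∀ x, 0 < f x) (hle : ∀ x, f x ≤ M) :
    ∃ g : ℝ → ℝ, (∀ t, HasDerivAt g (f (g t)) t) ∧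
      Tendsto g atTop atTop ∧ Tendsto g atBot atBot := by
  -- `g` is the inverse of the primitive of `1 / f`.
  let T : ℝ → ℝ := fun x ↦ ∫ y in (0 : ℝ)..x, (f y)⁻¹
  have hcont : Continuous fun x ↦ (f x)⁻¹ := hf.inv₀ fun x ↦ (hpos x).ne'
  have hT (x : ℝ) : HasDerivAt T (f x)⁻¹ x := hcont.integral_hasStrictDerivAt 0 x |>.hasDerivAt
  have hmono : StrictMono T := strictMono_of_hasDerivAt_pos hT fun x ↦ inv_pos.2 (hpos x)
  have hsurj : Function.Surjective T :=
    surjective_of_forall_le_deriv hT (inv_pos.2 ((hpos 0).trans_le (hle 0)))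
      fun x ↦ inv_anti₀ (hpos x) (hle x)
  let e := hmono.orderIsoOfSurjective T hsurj
  refine ⟨e.symm, fun t ↦ ?_, e.symm.tendsto_atTop, e.symm.tendsto_atBot⟩
  simpa using HasDerivAt.of_local_left_inverse e.symm.continuous.continuousAt (hT (e.symm t))
    (inv_pos.2 (hpos _)).ne' (Eventually.of_forall e.apply_symm_apply)

/-! ### Chains of three derivatives -/

/-- `f₁`, `f₂`, `f₃` are the first three derivatives of `f` on `ℝ`. The third one need not be
continuous. -/
structure HasDerivChain (f f₁ f₂ f₃ : ℝ → ℝ) : Prop where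
  hasDerivAt₀ : ∀ x, HasDerivAt f (f₁ x) x
  hasDerivAt₁ : ∀ x, HasDerivAt f₁ (f₂ x) x
  hasDerivAt₂ : ∀ x, HasDerivAt f₂ (f₃ x) x

namespace HasDerivChain

variable {f f₁ f₂ f₃ g g₁ g₂ g₃ : ℝ → ℝ}

lemma continuous (hf : HasDerivChain f f₁ f₂ f₃) : Continuous f :=
  continuous_iff_continuousAt.2 fun x ↦ (hf.hasDerivAt₀ x).continuousAt

lemma add (hf : HasDerivChain f f₁ f₂ f₃) (hg : HasDerivChain g g₁ g₂ g₃) :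
    HasDerivChain (fun x ↦ f x + g x) (fun x ↦ f₁ x + g₁ x) (fun x ↦ f₂ x + g₂ x)
      (fun x ↦ f₃ x + g₃ x) :=
  ⟨fun x ↦ (hf.hasDerivAt₀ x).add (hg.hasDerivAt₀ x),
    fun x ↦ (hf.hasDerivAt₁ x).add (hg.hasDerivAt₁ x),
    fun x ↦ (hf.hasDerivAt₂ x).add (hg.hasDerivAt₂ x)⟩

lemma const_mul (hf : HasDerivChain f f₁ f₂ f₃) (c : ℝ) :
    HasDerivChain (fun x ↦ c * f x) (fun x ↦ c * f₁ x) (fun x ↦ c * f₂ x) (fun x ↦ c * f₃ x) :=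
  ⟨fun x ↦ (hf.hasDerivAt₀ x).const_mul c, fun x ↦ (hf.hasDerivAt₁ x).const_mul c,
    fun x ↦ (hf.hasDerivAt₂ x).const_mul c⟩

lemma comp_affine (hf : HasDerivChain f f₁ f₂ f₃) (c d : ℝ) :
    HasDerivChain (fun x ↦ f (c * x + d)) (fun x ↦ c * f₁ (c * x + d))
      (fun x ↦ c ^ 2 * f₂ (c * x + d)) (fun x ↦ c ^ 3 * f₃ (c * x + d)) := by
  have inner (x : ℝ) : HasDerivAt (fun x ↦ c * x + d) c x := by
    simpa using ((hasDerivAt_id x).const_mul c).add_const d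
  refine ⟨fun x ↦ ?_, fun x ↦ ?_, fun x ↦ ?_⟩
  · exact ((hf.hasDerivAt₀ _).comp x (inner x)).congr_deriv (by ring)
  · exact (((hf.hasDerivAt₁ _).comp x (inner x)).const_mul c).congr_deriv (by ring)
  · exact (((hf.hasDerivAt₂ _).comp x (inner x)).const_mul (c ^ 2)).congr_deriv (by ring)

lemma eval (p : Polynomial ℝ) :
    HasDerivChain (fun x ↦ p.eval x) (fun x ↦ p.derivative.eval x)
      (fun x ↦ p.derivative.derivative.eval x)
      (fun x ↦ p.derivative.derivative.derivative.eval x) :=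
  ⟨p.hasDerivAt, p.derivative.hasDerivAt, p.derivative.derivative.hasDerivAt⟩

end HasDerivChain

section Interpolation

variable {v v₁ v₂ v₃ p p₁ p₂ p₃ r r' : ℝ → ℝ} {C M : ℝ}

-- Lagrange's identity: the derivative of `v'' p - v' p' + v p''` is `v''' p + v p'''`.
lemma abs_lagrange_bracket_zero_le (hv : HasDerivChain v v₁ v₂ v₃)
    (hp : HasDerivChain p p₁ p₂ p₃) (hp0 : p 1 = 0) (hp1 : p₁ 1 = 0) (hp2 : p₂ 1 = 0)
    (hr : ∀ t, HasDerivAt r (r' t) t)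
    (hpM : ∀ t ∈ Set.Icc (0 : ℝ) 1, |p t| + |p₃ t| ≤ M)
    (hv0 : ∀ t ∈ Set.Icc (0 : ℝ) 1, |v t| ≤ C * (1 - r' t))
    (hv3 : ∀ t ∈ Set.Icc (0 : ℝ) 1, |v₃ t| ≤ C * (1 - r' t)) :
    |v₂ 0 * p 0 - v₁ 0 * p₁ 0 + v 0 * p₂ 0| ≤ M * C * (1 + (r 0 - r 1)) := by
  let Z : ℝ → ℝ := fun t ↦ v₂ t * p t - v₁ t * p₁ t + v t * p₂ t
  let B : ℝ → ℝ := fun t ↦ M * C * (t - r t + r 0)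
  have hZ (t : ℝ) : HasDerivAt Z (v₃ t * p t + v t * p₃ t) t :=
    ((((hv.hasDerivAt₂ t).mul (hp.hasDerivAt₀ t)).sub
      ((hv.hasDerivAt₁ t).mul (hp.hasDerivAt₁ t))).add
      ((hv.hasDerivAt₀ t).mul (hp.hasDerivAt₂ t))).congr_deriv (by ring)
  have hB (t : ℝ) : HasDerivAt B (M * C * (1 - r' t)) t :=
    (((hasDerivAt_id t).sub (hr t)).add_const (r 0)).const_mul (M * C)
  have hZB : ∀ t ∈ Set.Ico (0 : ℝ) 1, ‖v₃ t * p t + v t * p₃ t‖ ≤ M * C * (1 - r' t) := by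
    intro t ht
    have ht := Set.Ico_subset_Icc_self ht
    have h0 := hv0 t ht
    calc ‖v₃ t * p t + v t * p₃ t‖ ≤ |v₃ t| * |p t| + |v t| * |p₃ t| := by
          rw [← abs_mul, ← abs_mul]
          exact abs_add_le _ _
      _ ≤ C * (1 - r' t) * |p t| + C * (1 - r' t) * |p₃ t| := by
          gcongr
          exact hv3 t ht
      _ = C * (1 - r' t) * (|p t| + |p₃ t|) := by ring
      _ ≤ C * (1 - r' t) * M := by
          gcongr
          · exact (abs_nonneg _).trans h0
          · exact hpM t ht
      _ = M * C * (1 - r' t) := by ring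
  have hZ1 : Z 1 = 0 := by simp [Z, hp0, hp1, hp2]
  have key : ‖Z 1 - Z 0‖ ≤ B 1 :=
    image_norm_le_of_norm_deriv_right_le_deriv_boundary (f := fun t ↦ Z t - Z 0) (B := B)
      (fun t _ ↦ ((hZ t).sub_const _).continuousAt.continuousWithinAt)
      (fun t _ ↦ ((hZ t).sub_const _).hasDerivWithinAt) (by simp [B]) hB hZB
      (Set.right_mem_Icc.2 zero_le_one)
  rw [hZ1, zero_sub, norm_neg] at key
  exact key.trans_eq (by ring)

open Polynomial in
lemma abs_le_of_abs_third_deriv_le (hv : HasDerivChain v v₁ v₂ v₃)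
    (hr : ∀ t, HasDerivAt r (r' t) t)
    (hv0 : ∀ t ∈ Set.Icc (0 : ℝ) 1, |v t| ≤ C * (1 - r' t))
    (hv3 : ∀ t ∈ Set.Icc (0 : ℝ) 1, |v₃ t| ≤ C * (1 - r' t)) :
    |v 0| ≤ 100 * C * (1 + (r 0 - r 1)) ∧ |v₁ 0| ≤ 100 * C * (1 + (r 0 - r 1)) ∧
      |v₂ 0| ≤ 100 * C * (1 + (r 0 - r 1)) := by
  -- Quintics with a triple zero at `1` and `(p, p', p'')(0)` equal to `(0, 0, 2)`, `(0, 1, 0)`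
  -- and `(1, 0, 0)`.
  have test (p : ℝ[X]) := abs_lagrange_bracket_zero_le (M := 100) hv (.eval p) (hr := hr)
    (hv0 := hv0) (hv3 := hv3)
  have pow_mem {t : ℝ} (ht : t ∈ Set.Icc (0 : ℝ) 1) (n : ℕ) : 0 ≤ t ^ n ∧ t ^ n ≤ 1 :=
    ⟨pow_nonneg ht.1 n, pow_le_one₀ ht.1 ht.2⟩
  have abs_add_abs_le {x y : ℝ} (h : (-20 ≤ x ∧ x ≤ 20) ∧ -80 ≤ y ∧ y ≤ 80) :
      |x| + |y| ≤ 100 := by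
    linarith [abs_le.2 h.1, abs_le.2 h.2]
  have h0 := test (X ^ 2 - 3 * X ^ 3 + 3 * X ^ 4 - X ^ 5) (by norm_num) (by norm_num)
    (by norm_num) fun t ht ↦ abs_add_abs_le <| by
      have := pow_mem ht 2; have := pow_mem ht 3; have := pow_mem ht 4; have := pow_mem ht 5
      norm_num
      refine ⟨⟨?_, ?_⟩, ?_, ?_⟩ <;> linarith [ht.1, ht.2]
  have h1 := test (X - 6 * X ^ 3 + 8 * X ^ 4 - 3 * X ^ 5) (by norm_num) (by norm_num)
    (by norm_num) fun t ht ↦ abs_add_abs_le <| by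
      have := pow_mem ht 2; have := pow_mem ht 3; have := pow_mem ht 4; have := pow_mem ht 5
      norm_num
      refine ⟨⟨?_, ?_⟩, ?_, ?_⟩ <;> nlinarith [ht.1, ht.2]
  have h2 := test (1 - 10 * X ^ 3 + 15 * X ^ 4 - 6 * X ^ 5) (by norm_num) (by norm_num)
    (by norm_num) fun t ht ↦ abs_add_abs_le <| by
      have := pow_mem ht 2; have := pow_mem ht 3; have := pow_mem ht 4; have := pow_mem ht 5
      norm_num
      refine ⟨⟨?_, ?_⟩, ?_, ?_⟩ <;> nlinarith [ht.1, ht.2]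
  norm_num at h0 h1 h2
  exact ⟨by linarith [abs_nonneg (v 0)], h1, h2⟩

end Interpolation

/-! ### Dissipative third-order equations -/

section Monotonicity

variable {f f' v v₁ v₂ v₃ : ℝ → ℝ} {a b n M : ℝ}

lemma antitoneOn_Icc_of_hasDerivAt_nonpos (hf : ∀ t, HasDerivAt f (f' t) t)
    (hf' : ∀ t ∈ Set.Icc a b, f' t ≤ 0) : AntitoneOn f (Set.Icc a b) :=
  antitoneOn_of_hasDerivWithinAt_nonpos (convex_Icc a b)
    (fun t _ ↦ (hf t).continuousAt.continuousWithinAt) (fun t _ ↦ (hf t).hasDerivWithinAt)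
    fun t ht ↦ hf' t (interior_subset ht)

lemma HasDerivChain.neg_nonneg_of_third_deriv_le (hv : HasDerivChain v v₁ v₂ v₃) (hn : 0 ≤ n)
    (hM : ∀ t ∈ Set.Icc (-n) n, v₃ t ≤ M) (hM₀ : 0 ≤ M) (h₀ : v n = 0) (h₁ : v₁ n = 0)
    (h₂ : v₂ n = 2 * n * M) : 0 ≤ v (-n) := by
  have right_mem : n ∈ Set.Icc (-n) n := Set.right_mem_Icc.2 (by linarith)
  have nonneg₂ : ∀ t ∈ Set.Icc (-n) n, 0 ≤ v₂ t := by
    intro t ht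
    have anti : AntitoneOn (fun t ↦ v₂ t - M * t) (Set.Icc (-n) n) :=
      antitoneOn_Icc_of_hasDerivAt_nonpos
        (fun t ↦ (hv.hasDerivAt₂ t).fun_sub (hasDerivAt_const_mul M))
        fun t ht ↦ sub_nonpos.2 (hM t ht)
    have := anti ht right_mem ht.2
    have : 0 ≤ M * (n + t) := mul_nonneg hM₀ (by linarith [ht.1])
    linarith
  have nonneg_neg₁ : ∀ t ∈ Set.Icc (-n) n, v₁ t ≤ 0 := by
    intro t ht
    have := antitoneOn_Icc_of_hasDerivAt_nonpos (fun t ↦ (hv.hasDerivAt₁ t).fun_neg)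
      (fun t ht ↦ neg_nonpos.2 (nonneg₂ t ht)) ht right_mem ht.2
    linarith
  have := antitoneOn_Icc_of_hasDerivAt_nonpos hv.hasDerivAt₀ nonneg_neg₁
    (Set.left_mem_Icc.2 (by linarith)) right_mem (by linarith)
  rwa [h₀] at this

end Monotonicity

section Dissipative

open scoped NNReal

/-- The conditions on an equation `u''' = N x u` under which it has a solution on `ℝ` with bounded
energy. The quantity `E` is the rate at which energy is dissipated, and `w x₀` is the length of the
window to the right of `x₀` on which `E` controls `u` and `N`. -/
structure DissipativeField (N E : ℝ → ℝ → ℝ) (w : ℝ → ℝ) (C : ℝ) : Prop where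
  continuous_left : ∀ u, Continuous (N · u)
  lipschitz : ∀ T : ℝ, ∃ K : ℝ≥0, ∀ t ∈ Set.Icc (-T) T, LipschitzWith K (N t)
  bounded : ∀ T : ℝ, ∃ M : ℝ, ∀ t ∈ Set.Icc (-T) T, ∀ u, |N t u| ≤ M
  rate_nonneg : ∀ x u, 0 ≤ E x u
  window_pos : ∀ x, 0 < w x
  window_le_one : ∀ x, w x ≤ 1
  mul_add_rate_le : ∀ x u, u * N x u + E x u ≤ C / (1 + x ^ 2)
  abs_le_rate : ∀ x₀, ∀ x ∈ Set.Icc x₀ (x₀ + w x₀), ∀ u, |u| ≤ C * (w x₀ + w x₀ ^ 2 * E x u)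
  abs_field_le : ∀ x₀, ∀ x ∈ Set.Icc x₀ (x₀ + w x₀), ∀ u,
    |N x u| * w x₀ ^ 2 ≤ C * (1 + w x₀ * E x u)

/-- The equation `u''' = N x u` as a first-order system for `(u, u', u'')`. -/
def phaseField (N : ℝ → ℝ → ℝ) (x : ℝ) (z : ℝ × ℝ × ℝ) : ℝ × ℝ × ℝ :=
  (z.2.1, z.2.2, N x z.1)

/-- The energy `u u'' - u'² / 2`, corrected so that it decreases along solutions of a dissipative
equation. -/
noncomputable def energy (C x : ℝ) (z : ℝ × ℝ × ℝ) : ℝ :=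
  z.1 * z.2.2 - z.2.1 ^ 2 / 2 - C * arctan x

namespace DissipativeField

variable {N E : ℝ → ℝ → ℝ} {w : ℝ → ℝ} {C : ℝ} {γ : ℝ → ℝ × ℝ × ℝ} {x y : ℝ}

lemma hasDerivChain (hγ : IsIntegralCurve γ (phaseField N)) :
    HasDerivChain (fun x ↦ (γ x).1) (fun x ↦ (γ x).2.1) (fun x ↦ (γ x).2.2)
      (fun x ↦ N x (γ x).1) :=
  ⟨fun x ↦ (hγ x).fst, fun x ↦ (hγ x).snd.fst, fun x ↦ (hγ x).snd.snd⟩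

lemma hasDerivAt_energy (hγ : IsIntegralCurve γ (phaseField N)) (x : ℝ) :
    HasDerivAt (fun x ↦ energy C x (γ x)) ((γ x).1 * N x (γ x).1 - C / (1 + x ^ 2)) x := by
  obtain ⟨h₀, h₁, h₂⟩ := hasDerivChain hγ
  refine ((((h₀ x).mul (h₂ x)).sub (((h₁ x).pow 2).div_const 2)).sub
    ((hasDerivAt_arctan x).const_mul C)).congr_deriv ?_
  norm_num
  ring

lemma continuous_phaseField (hN : DissipativeField N E w C) (z : ℝ × ℝ × ℝ) :
    Continuous (phaseField N · z) :=
  continuous_const.prodMk (continuous_const.prodMk (hN.continuous_left z.1))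

lemma lipschitz_phaseField (hN : DissipativeField N E w C) (T : ℝ) :
    ∃ K : ℝ≥0, ∀ t ∈ Set.Icc (-T) T, LipschitzWith K (phaseField N t) := by
  obtain ⟨K, hK⟩ := hN.lipschitz T
  exact ⟨_, fun t ht ↦ (LipschitzWith.prod_fst.comp LipschitzWith.prod_snd).prodMk
    ((LipschitzWith.prod_snd.comp LipschitzWith.prod_snd).prodMk
      ((hK t ht).comp LipschitzWith.prod_fst))⟩

lemma const_nonneg (hN : DissipativeField N E w C) : 0 ≤ C := by
  have := (abs_nonneg _).trans (hN.abs_le_rate 0 0 ⟨le_rfl, by simpa using (hN.window_pos 0).le⟩ 0)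
  have hw := hN.window_pos 0
  have hE := hN.rate_nonneg 0 0
  exact nonneg_of_mul_nonneg_left this (by positivity)

lemma abs_const_mul_arctan_le (hN : DissipativeField N E w C) (x : ℝ) :
    |C * arctan x| ≤ 2 * C := by
  have := arctan_lt_pi_div_two x
  have := neg_pi_div_two_lt_arctan x
  have := pi_le_four
  rw [abs_mul, abs_of_nonneg hN.const_nonneg, mul_comm]
  exact mul_le_mul_of_nonneg_right (abs_le.2 ⟨by linarith, by linarith⟩) hN.const_nonneg

lemma antitone_energy (hN : DissipativeField N E w C) (hγ : IsIntegralCurve γ (phaseField N)) :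
    Antitone fun x ↦ energy C x (γ x) :=
  antitone_of_hasDerivAt_nonpos (hasDerivAt_energy hγ) fun x ↦ sub_nonpos.2 <| by
    linarith [hN.mul_add_rate_le x (γ x).1, hN.rate_nonneg x (γ x).1]

lemma mul_sub_le_energy_sub (hN : DissipativeField N E w C)
    (hγ : IsIntegralCurve γ (phaseField N)) {e : ℝ} (hxy : x ≤ y)
    (he : ∀ t ∈ Set.Icc x y, e ≤ E t (γ t).1) :
    e * (y - x) ≤ energy C x (γ x) - energy C y (γ y) := by
  have anti : AntitoneOn (fun t ↦ energy C t (γ t) + e * t) (Set.Icc x y) :=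
    antitoneOn_Icc_of_hasDerivAt_nonpos
      (fun t ↦ (hasDerivAt_energy hγ t).fun_add (hasDerivAt_const_mul e))
      fun t ht ↦ by linarith [hN.mul_add_rate_le t (γ t).1, he t ht]
  have := anti (Set.left_mem_Icc.2 hxy) (Set.right_mem_Icc.2 hxy) hxy
  linarith

lemma abs_le_of_energy_sub_le (hN : DissipativeField N E w C)
    (hγ : IsIntegralCurve γ (phaseField N)) {D : ℝ} (x : ℝ)
    (hD : energy C x (γ x) - energy C (x + w x) (γ (x + w x)) ≤ D) :
    |(γ x).1| ≤ 100 * C * (1 + D) * w x ∧ |(γ x).2.1| ≤ 100 * C * (1 + D) ∧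
      |(γ x).2.2| * w x ≤ 100 * C * (1 + D) := by
  have hw := hN.window_pos x
  set ω := w x
  have mem_window {t : ℝ} (ht : t ∈ Set.Icc (0 : ℝ) 1) : ω * t + x ∈ Set.Icc x (x + ω) :=
    ⟨by nlinarith [ht.1], by nlinarith [ht.2]⟩
  -- On the window, `v t = u (x + ω t) / ω` satisfies `|v|, |v'''| ≤ C (1 + ω E)`.
  have chain := ((hasDerivChain hγ).comp_affine ω x).const_mul ω⁻¹
  have energy_deriv (t : ℝ) := (hasDerivAt_energy (C := C) hγ (ω * t + x)).comp t
    ((hasDerivAt_const_mul ω).add_const x)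
  have rate_le (t u : ℝ) : C * (1 + ω * E (ω * t + x) u) ≤
      C * (1 - (u * N (ω * t + x) u - C / (1 + (ω * t + x) ^ 2)) * ω) :=
    mul_le_mul_of_nonneg_left
      (by nlinarith [hN.mul_add_rate_le (ω * t + x) u]) hN.const_nonneg
  have key := abs_le_of_abs_third_deriv_le (C := C) chain energy_deriv
    (fun t ht ↦ by
      refine le_trans ?_ (rate_le _ _)
      have := hN.abs_le_rate x _ (mem_window ht) (γ (ω * t + x)).1
      rw [abs_mul, abs_of_pos (inv_pos.2 hw), inv_mul_le_iff₀ hw]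
      exact this.trans_eq (by ring))
    (fun t ht ↦ by
      refine le_trans ?_ (rate_le _ _)
      have := hN.abs_field_le x _ (mem_window ht) (γ (ω * t + x)).1
      rw [show ω⁻¹ * (ω ^ 3 * N (ω * t + x) (γ (ω * t + x)).1) =
        N (ω * t + x) (γ (ω * t + x)).1 * ω ^ 2 by field_simp, abs_mul, abs_of_pos (pow_pos hw 2)]
      exact this)
  have hbound : 100 * C * (1 + (energy C x (γ x) - energy C (x + ω) (γ (x + ω)))) ≤
      100 * C * (1 + D) := by
    have := hN.const_nonneg
    gcongr
  simp only [Function.comp_apply, mul_zero, zero_add, mul_one, add_comm ω x] at key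
  obtain ⟨h₀, h₁, h₂⟩ := key
  replace h₀ := h₀.trans hbound
  replace h₁ := h₁.trans hbound
  replace h₂ := h₂.trans hbound
  rw [abs_mul, abs_of_pos (inv_pos.2 hw), inv_mul_le_iff₀ hw] at h₀
  rw [inv_mul_cancel_left₀ hw.ne'] at h₁
  rw [show ω⁻¹ * (ω ^ 2 * (γ x).2.2) = (γ x).2.2 * ω by field_simp, abs_mul, abs_of_pos hw] at h₂
  exact ⟨h₀.trans_eq (mul_comm _ _), h₁, h₂⟩

lemma exists_isIntegralCurve_fst_eq_zero (hN : DissipativeField N E w C) {n : ℝ} (hn : 0 ≤ n) :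
    ∃ γ : ℝ → ℝ × ℝ × ℝ, IsIntegralCurve γ (phaseField N) ∧
      (γ n).1 = 0 ∧ (γ n).2.1 = 0 ∧ (γ (-n)).1 = 0 := by
  obtain ⟨S, hS, hScont⟩ :=
    exists_continuous_global_flow hN.continuous_phaseField hN.lipschitz_phaseField n
  obtain ⟨M, hM⟩ := hN.bounded n
  have hM₀ : 0 ≤ M := (abs_nonneg _).trans (hM n ⟨by linarith, le_rfl⟩ 0)
  have hcont : Continuous fun σ : ℝ ↦ (S (0, 0, σ) (-n)).1 :=
    continuous_fst.comp ((hScont (-n)).comp (by fun_prop))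
  have hpos : 0 ≤ (S (0, 0, 2 * n * M) (-n)).1 := by
    obtain ⟨hinit, hsol⟩ := hS (0, 0, 2 * n * M)
    exact (hasDerivChain hsol).neg_nonneg_of_third_deriv_le hn
      (fun t ht ↦ (abs_le.1 (hM t ht _)).2) hM₀ (by simp [hinit]) (by simp [hinit])
      (by simp [hinit])
  have hneg : (S (0, 0, -(2 * n * M)) (-n)).1 ≤ 0 := by
    obtain ⟨hinit, hsol⟩ := hS (0, 0, -(2 * n * M))
    have := ((hasDerivChain hsol).const_mul (-1)).neg_nonneg_of_third_deriv_le hn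
      (fun t ht ↦ by linarith [(abs_le.1 (hM t ht (S (0, 0, -(2 * n * M)) t).1)).1]) hM₀
      (by simp [hinit]) (by simp [hinit]) (by simp [hinit])
    linarith
  obtain ⟨σ, hσ⟩ := mem_range_of_exists_le_of_exists_ge hcont ⟨_, hneg⟩ ⟨_, hpos⟩
  exact ⟨S (0, 0, σ), (hS _).2, by rw [(hS _).1], by rw [(hS _).1], hσ⟩

lemma exists_isIntegralCurve_energy_le (hN : DissipativeField N E w C) {n : ℝ} (hn : 0 ≤ n) :
    ∃ γ : ℝ → ℝ × ℝ × ℝ, IsIntegralCurve γ (phaseField N) ∧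
      energy C (-n) (γ (-n)) ≤ 2 * C ∧ -(2 * C) ≤ energy C n (γ n) := by
  obtain ⟨γ, hγ, h₀, h₁, h₀'⟩ := hN.exists_isIntegralCurve_fst_eq_zero hn
  have hl := abs_le.1 (hN.abs_const_mul_arctan_le (-n))
  have hr := abs_le.1 (hN.abs_const_mul_arctan_le n)
  refine ⟨γ, hγ, ?_, ?_⟩
  · rw [energy, h₀']
    nlinarith [sq_nonneg (γ (-n)).2.1]
  · rw [energy, h₀, h₁]
    linarith

/-- The points `z` such that the solution `S z` has energy in `[-2C, 2C]` on `[-(n+1), n+1]`. -/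
def boundedEnergySet (C : ℝ) (S : ℝ × ℝ × ℝ → ℝ → ℝ × ℝ × ℝ) (n : ℕ) : Set (ℝ × ℝ × ℝ) :=
  {z | energy C (-(n + 1)) (S z (-(n + 1))) ≤ 2 * C ∧ -(2 * C) ≤ energy C (n + 1) (S z (n + 1))}

variable {S : ℝ × ℝ × ℝ → ℝ → ℝ × ℝ × ℝ}

lemma isClosed_boundedEnergySet (hS : ∀ t, Continuous (S · t)) (n : ℕ) :
    IsClosed (boundedEnergySet C S n) := by
  have hcont (t : ℝ) : Continuous fun z ↦ energy C t (S z t) := by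
    have := hS t
    unfold energy
    fun_prop
  exact (isClosed_le (hcont _) continuous_const).inter (isClosed_le continuous_const (hcont _))

lemma boundedEnergySet_antitone (hN : DissipativeField N E w C)
    (hS : ∀ z, IsIntegralCurve (S z) (phaseField N)) : Antitone (boundedEnergySet C S) := by
  rintro m n hmn z ⟨hl, hr⟩
  have hmn' : (m : ℝ) ≤ n := by exact_mod_cast hmn
  have anti := hN.antitone_energy (hS z)
  exact ⟨(anti (by linarith)).trans hl, hr.trans (anti (by linarith))⟩

lemma isCompact_boundedEnergySet_zero (hN : DissipativeField N E w C)
    (hS : ∀ z, S z 0 = z ∧ IsIntegralCurve (S z) (phaseField N))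
    (hcont : ∀ t, Continuous (S · t)) : IsCompact (boundedEnergySet C S 0) := by
  have hw := hN.window_pos 0
  have hC := hN.const_nonneg
  set B := 100 * C * (1 + 4 * C)
  refine Metric.isCompact_of_isClosed_isBounded (isClosed_boundedEnergySet hcont 0)
    ((Metric.isBounded_closedBall (x := (0 : ℝ × ℝ × ℝ)) (r := B / w 0)).subset ?_)
  rintro z ⟨hl, hr⟩
  rw [Nat.cast_zero, zero_add] at hl hr
  have anti := hN.antitone_energy (hS z).2
  have hle₀ : energy C 0 (S z 0) ≤ energy C (-1) (S z (-1)) := anti (by norm_num)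
  have hle₁ : energy C 1 (S z 1) ≤ energy C (0 + w 0) (S z (0 + w 0)) :=
    anti (by simpa using hN.window_le_one 0)
  have bounds := hN.abs_le_of_energy_sub_le (hS z).2 (D := 4 * C) 0 (by linarith)
  rw [(hS z).1] at bounds
  have hB : B ≤ B / w 0 := le_div_self (by positivity) hw (hN.window_le_one 0)
  have hBw : B * w 0 ≤ B := mul_le_of_le_one_right (by positivity) (hN.window_le_one 0)
  rw [mem_closedBall_zero_iff, norm_prod_le_iff, norm_prod_le_iff]
  exact ⟨bounds.1.trans (hBw.trans hB), bounds.2.1.trans hB, (le_div_iff₀ hw).2 bounds.2.2⟩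

lemma nonempty_boundedEnergySet (hN : DissipativeField N E w C)
    (hS : ∀ z, S z 0 = z ∧ IsIntegralCurve (S z) (phaseField N)) (n : ℕ) :
    (boundedEnergySet C S n).Nonempty := by
  obtain ⟨γ, hγ, hl, hr⟩ := hN.exists_isIntegralCurve_energy_le (n := n + 1) (by positivity)
  have heq : S (γ 0) = γ :=
    isIntegralCurve_eq hN.lipschitz_phaseField (hS _).2 hγ (t₀ := 0) (hS _).1
  exact ⟨γ 0, by rwa [heq], by rwa [heq]⟩

lemma exists_isIntegralCurve_forall_energy_le (hN : DissipativeField N E w C) :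
    ∃ γ : ℝ → ℝ × ℝ × ℝ, IsIntegralCurve γ (phaseField N) ∧
      ∀ x, energy C x (γ x) ≤ 2 * C ∧ -(2 * C) ≤ energy C x (γ x) := by
  obtain ⟨S, hS, hcont⟩ :=
    exists_continuous_global_flow hN.continuous_phaseField hN.lipschitz_phaseField 0
  obtain ⟨z, hz⟩ := IsCompact.nonempty_iInter_of_sequence_nonempty_isCompact_isClosed
    (boundedEnergySet C S)
    (fun n ↦ hN.boundedEnergySet_antitone (fun z ↦ (hS z).2) n.le_succ)
    (hN.nonempty_boundedEnergySet hS) (hN.isCompact_boundedEnergySet_zero hS hcont)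
    (isClosed_boundedEnergySet hcont)
  refine ⟨S z, (hS z).2, fun x ↦ ?_⟩
  obtain ⟨n, hn⟩ := exists_nat_ge |x|
  obtain ⟨hnl, hnr⟩ := abs_le.1 hn
  obtain ⟨hl, hr⟩ := Set.mem_iInter.1 hz n
  have anti := hN.antitone_energy (hS z).2
  exact ⟨(anti (by linarith)).trans hl, hr.trans (anti (by linarith))⟩

theorem exists_hasDerivChain (hN : DissipativeField N E w C) :
    ∃ u u₁ u₂ : ℝ → ℝ, HasDerivChain u u₁ u₂ (fun x ↦ N x (u x)) ∧
      (∀ x, |u x| ≤ 100 * C * (1 + 4 * C) * w x ∧ |u₁ x| ≤ 100 * C * (1 + 4 * C) ∧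
        |u₂ x| * w x ≤ 100 * C * (1 + 4 * C)) ∧
      ∀ x y e, x ≤ y → (∀ t ∈ Set.Icc x y, e ≤ E t (u t)) → e * (y - x) ≤ 4 * C := by
  obtain ⟨γ, hγ, henergy⟩ := hN.exists_isIntegralCurve_forall_energy_le
  have sub_le (x y : ℝ) : energy C x (γ x) - energy C y (γ y) ≤ 4 * C := by
    linarith [(henergy x).1, (henergy y).2]
  exact ⟨_, _, _, hasDerivChain hγ, fun x ↦ hN.abs_le_of_energy_sub_le hγ x (sub_le _ _),
    fun x y e hxy he ↦ (hN.mul_sub_le_energy_sub hγ hxy he).trans (sub_le _ _)⟩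

end DissipativeField

end Dissipative

/-! ### Powers of `1 + x²` -/

section BracketPow

variable {s x : ℝ}

/-- The power `(1 + x²)⁻ˢ`, the prototype of a function decaying at rate `2s`. -/
noncomputable def bracketPow (s x : ℝ) : ℝ := (1 + x ^ 2) ^ (-s)

/-- The first derivative of `bracketPow s`. -/
noncomputable def bracketPow₁ (s x : ℝ) : ℝ := -(2 * s) * x * bracketPow (s + 1) x

/-- The second derivative of `bracketPow s`. -/
noncomputable def bracketPow₂ (s x : ℝ) : ℝ :=
  -(2 * s) * bracketPow (s + 1) x + 4 * s * (s + 1) * x ^ 2 * bracketPow (s + 2) x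

/-- The third derivative of `bracketPow s`. -/
noncomputable def bracketPow₃ (s x : ℝ) : ℝ :=
  12 * s * (s + 1) * x * bracketPow (s + 2) x -
    8 * s * (s + 1) * (s + 2) * x ^ 3 * bracketPow (s + 3) x

lemma bracketPow_pos (s x : ℝ) : 0 < bracketPow s x := rpow_pos_of_pos (by positivity) _

lemma continuous_bracketPow (s : ℝ) : Continuous (bracketPow s) :=
  (by fun_prop : Continuous fun x : ℝ ↦ 1 + x ^ 2).rpow_const
    fun x ↦ Or.inl (by positivity : (0 : ℝ) < 1 + x ^ 2).ne'

lemma continuous_bracketPow₃ (s : ℝ) : Continuous (bracketPow₃ s) := by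
  have := continuous_bracketPow (s + 2)
  have := continuous_bracketPow (s + 3)
  unfold bracketPow₃
  fun_prop

lemma bracketPow_natCast (n : ℕ) (x : ℝ) : bracketPow n x = ((1 + x ^ 2) ^ n)⁻¹ := by
  rw [bracketPow, rpow_neg (by positivity), rpow_natCast]

lemma bracketPow_pow (s : ℝ) (n : ℕ) (x : ℝ) : bracketPow s x ^ n = bracketPow (n * s) x := by
  rw [bracketPow, bracketPow, ← rpow_natCast, ← rpow_mul (by positivity)]
  ring_nf

lemma hasDerivAt_bracketPow (s x : ℝ) : HasDerivAt (bracketPow s) (bracketPow₁ s x) x := by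
  have hsq : HasDerivAt (fun x : ℝ ↦ 1 + x ^ 2) (2 * x) x := by
    simpa using (hasDerivAt_pow 2 x).const_add 1
  refine (hsq.rpow_const (p := -s) (Or.inl (by positivity))).congr_deriv ?_
  rw [bracketPow₁, bracketPow, neg_add']
  ring

lemma hasDerivChain_bracketPow (s : ℝ) :
    HasDerivChain (bracketPow s) (bracketPow₁ s) (bracketPow₂ s) (bracketPow₃ s) where
  hasDerivAt₀ := hasDerivAt_bracketPow s
  hasDerivAt₁ x := by
    refine (((hasDerivAt_id x).const_mul (-(2 * s))).mul
      (hasDerivAt_bracketPow (s + 1) x)).congr_deriv ?_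
    rw [bracketPow₁, bracketPow₂, id, show s + 1 + 1 = s + 2 by ring]
    ring
  hasDerivAt₂ x := by
    refine (((hasDerivAt_bracketPow (s + 1) x).const_mul (-(2 * s))).add
      (((hasDerivAt_pow 2 x).const_mul (4 * s * (s + 1))).mul
        (hasDerivAt_bracketPow (s + 2) x))).congr_deriv ?_
    rw [bracketPow₁, bracketPow₁, bracketPow₃, show s + 1 + 1 = s + 2 by ring,
      show s + 2 + 1 = s + 3 by ring]
    push_cast
    ring

lemma abs_pow_mul_bracketPow_le_one {j : ℕ} (hj : j ≤ 2 * s) (x : ℝ) :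
    |x ^ j * bracketPow s x| ≤ 1 := by
  have hx : |x| ≤ (1 + x ^ 2) ^ (1 / 2 : ℝ) := by
    rw [← sqrt_eq_rpow]
    exact abs_le_sqrt (by linarith)
  rw [abs_mul, abs_of_pos (bracketPow_pos s x), bracketPow, rpow_neg (by positivity), abs_pow,
    ← div_eq_mul_inv, div_le_one (by positivity)]
  calc |x| ^ j ≤ ((1 + x ^ 2) ^ (1 / 2 : ℝ)) ^ j := by gcongr
    _ = (1 + x ^ 2) ^ (1 / 2 * j : ℝ) := by rw [← rpow_natCast, ← rpow_mul (by positivity)]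
    _ ≤ (1 + x ^ 2) ^ s := rpow_le_rpow_of_exponent_le (by nlinarith [sq_nonneg x]) (by linarith)

lemma bracketPow_le_one (hs : 0 ≤ s) (x : ℝ) : bracketPow s x ≤ 1 := by
  simpa [abs_of_pos (bracketPow_pos s x)] using
    abs_pow_mul_bracketPow_le_one (j := 0) (s := s) (by simpa using hs) x

lemma abs_bracketPow₁_le (hs : 0 ≤ s) (x : ℝ) : |bracketPow₁ s x| ≤ 2 * s := by
  have h := abs_pow_mul_bracketPow_le_one (j := 1) (s := s + 1) (by push_cast; linarith) x
  rw [bracketPow₁, show -(2 * s) * x * bracketPow (s + 1) x =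
    -(2 * s) * (x ^ 1 * bracketPow (s + 1) x) by ring, abs_mul, abs_neg,
    abs_of_nonneg (by positivity)]
  exact mul_le_of_le_one_right (by positivity) h

lemma abs_bracketPow₂_le (hs : 0 ≤ s) (x : ℝ) :
    |bracketPow₂ s x| ≤ 2 * s + 4 * s * (s + 1) := by
  have h₀ := abs_le.1 (abs_pow_mul_bracketPow_le_one (j := 0) (s := s + 1)
    (by push_cast; linarith) x)
  have h₂ := abs_le.1 (abs_pow_mul_bracketPow_le_one (j := 2) (s := s + 2)
    (by push_cast; linarith) x)
  have hs' : 0 ≤ 4 * s * (s + 1) := by positivity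
  rw [bracketPow₂, abs_le]
  constructor <;> nlinarith

lemma abs_bracketPow₃_le (hs : 0 ≤ s) (x : ℝ) :
    |bracketPow₃ s x| ≤ 12 * s * (s + 1) + 8 * s * (s + 1) * (s + 2) := by
  have h₁ := abs_le.1 (abs_pow_mul_bracketPow_le_one (j := 1) (s := s + 2)
    (by push_cast; linarith) x)
  have h₃ := abs_le.1 (abs_pow_mul_bracketPow_le_one (j := 3) (s := s + 3)
    (by push_cast; linarith) x)
  have hc₁ : 0 ≤ 12 * s * (s + 1) := by positivity
  have hc₃ : 0 ≤ 8 * s * (s + 1) * (s + 2) := by positivity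
  rw [bracketPow₃, abs_le]
  constructor <;> nlinarith

end BracketPow

section Weight

variable {x z : ℝ}

/-- The weight `Y = (1 + x²)^(-1/9)`. In terms of it the profile `(1 + x²)^(-1/3)` is `Y³`, and
solutions vary on the length scale `Y⁴`. -/
noncomputable def weight (x : ℝ) : ℝ := bracketPow (1 / 9) x

lemma weight_pos (x : ℝ) : 0 < weight x := bracketPow_pos _ x

lemma weight_le_one (x : ℝ) : weight x ≤ 1 := bracketPow_le_one (by norm_num) x

lemma weight_pow_le_one (n : ℕ) (x : ℝ) : weight x ^ n ≤ 1 :=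
  pow_le_one₀ (weight_pos x).le (weight_le_one x)

lemma weight_pow_le_weight_pow {m n : ℕ} (h : m ≤ n) (x : ℝ) : weight x ^ n ≤ weight x ^ m :=
  pow_le_pow_of_le_one (weight_pos x).le (weight_le_one x) h

lemma continuous_weight : Continuous weight := continuous_bracketPow _

lemma weight_pow (n : ℕ) (x : ℝ) : weight x ^ n = bracketPow (n / 9) x := by
  rw [weight, bracketPow_pow, mul_one_div]

lemma weight_pow_nine_mul (x : ℝ) : weight x ^ 9 * (1 + x ^ 2) = 1 := by
  rw [weight_pow, show ((9 : ℕ) : ℝ) / 9 = (1 : ℕ) by norm_num, bracketPow_natCast, pow_one,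
    inv_mul_cancel₀ (by positivity)]

lemma hasDerivAt_weight_pow (n : ℕ) (x : ℝ) :
    HasDerivAt (fun x ↦ weight x ^ n) (-(2 * n / 9) * x * weight x ^ (n + 9)) x := by
  have hfun : (fun x ↦ weight x ^ n) = bracketPow (n / 9) := funext (weight_pow n)
  rw [hfun]
  refine (hasDerivAt_bracketPow _ x).congr_deriv ?_
  rw [bracketPow₁, weight_pow, show ((n + 9 : ℕ) : ℝ) / 9 = n / 9 + 1 by push_cast; ring]
  ring

lemma abs_pow_mul_weight_pow_le_one {j n : ℕ} (hj : 9 * j ≤ 2 * n) (x : ℝ) :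
    |x ^ j * weight x ^ n| ≤ 1 := by
  rw [weight_pow]
  refine abs_pow_mul_bracketPow_le_one ?_ x
  have : (9 * j : ℝ) ≤ 2 * n := by exact_mod_cast hj
  linarith

lemma weight_pow_three_le_mul (h : |x - z| ≤ 1) : weight x ^ 3 ≤ 3 * weight z ^ 3 := by
  refine le_of_pow_le_pow_left₀ (n := 3) (by norm_num) (by have := weight_pos z; positivity) ?_
  have hx := weight_pow_nine_mul x
  have hz := weight_pow_nine_mul z
  have hbracket : 1 + z ^ 2 ≤ 27 * (1 + x ^ 2) := by
    nlinarith [sq_le_one_iff_abs_le_one (x - z) |>.2 h, sq_nonneg (2 * x - z)]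
  have hpos : 0 < weight x ^ 9 * weight z ^ 9 := by
    have := weight_pos x; have := weight_pos z; positivity
  calc (weight x ^ 3) ^ 3 = weight x ^ 9 * weight z ^ 9 * (1 + z ^ 2) := by
        linear_combination -weight x ^ 9 * hz
    _ ≤ weight x ^ 9 * weight z ^ 9 * (27 * (1 + x ^ 2)) := by gcongr
    _ = (3 * weight z ^ 3) ^ 3 := by linear_combination 27 * weight z ^ 9 * hx

end Weight

/-! ### Approximate solutions -/

section Bump

variable {z L : ℝ}

lemma one_le_hundred_mul_bracketPow₃_two (hz : z ∈ Set.Icc (-(5 / 2)) (-(3 / 2))) :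
    1 ≤ 100 * bracketPow₃ 2 z := by
  obtain ⟨hz₁, hz₂⟩ := hz
  have hsq : 9 / 4 ≤ z ^ 2 := by nlinarith
  have hsq' : z ^ 2 ≤ 25 / 4 := by nlinarith
  have hden : (1 + z ^ 2) ^ 5 ≤ (29 / 4) ^ 5 := by gcongr; linarith
  have hnum : 297 ≤ 72 * z - 120 * z ^ 3 := by nlinarith
  have hquot : bracketPow₃ 2 z = (72 * z - 120 * z ^ 3) / (1 + z ^ 2) ^ 5 := by
    rw [bracketPow₃, show (2 + 2 : ℝ) = (4 : ℕ) by norm_num, show (2 + 3 : ℝ) = (5 : ℕ) by norm_num,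
      bracketPow_natCast, bracketPow_natCast]
    push_cast
    field_simp
    ring
  rw [hquot, ← mul_div_assoc, one_le_div (by positivity)]
  norm_num at hden
  linarith

lemma bracketPow_two_comp_affine_le (hL : 0 < L) (x : ℝ) :
    bracketPow 2 (L⁻¹ * x + -2) ≤ (1 + 8 * L ^ 2) ^ 2 * bracketPow 2 x := by
  set z := L⁻¹ * x + -2
  have hx : x = L * (z + 2) := by simp only [z]; field_simp; ring
  have hle : 1 + x ^ 2 ≤ (1 + 8 * L ^ 2) * (1 + z ^ 2) := by
    rw [hx]
    nlinarith [sq_nonneg z, mul_nonneg (sq_nonneg L) (sq_nonneg (z - 2)),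
      mul_nonneg (sq_nonneg L) (sq_nonneg z)]
  rw [show (2 : ℝ) = (2 : ℕ) by norm_num, bracketPow_natCast, bracketPow_natCast,
    ← div_eq_mul_inv, le_div_iff₀ (by positivity), inv_mul_le_iff₀ (by positivity), ← mul_pow,
    mul_comm (1 + z ^ 2)]
  gcongr

-- A rescaled translate of `(1 + x²)⁻²`: the translation makes the third derivative positive on
-- `|x| ≤ L / 2`, and for larger `|x|` the term `x² / 2` dominates.
lemma sub_sq_half_le_mul_bracketPow₃_two {B : ℝ} (hB : 1 ≤ B) (x : ℝ) :
    B - x ^ 2 / 2 ≤ B * (100 * bracketPow₃ 2 ((500 * B)⁻¹ * x + -2)) := by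
  have hinv : (500 * B)⁻¹ * (500 * B) = 1 := inv_mul_cancel₀ (by positivity)
  have hinv₀ : 0 < (500 * B)⁻¹ := by positivity
  rcases le_or_gt |x| (250 * B) with hx | hx
  · obtain ⟨hxl, hxr⟩ := abs_le.1 hx
    have hmid := one_le_hundred_mul_bracketPow₃_two (z := (500 * B)⁻¹ * x + -2)
      ⟨by nlinarith [hinv₀], by nlinarith [hinv₀]⟩
    nlinarith [sq_nonneg x]
  · have hx' : (250 * B) ^ 2 ≤ x ^ 2 := by
      rw [← sq_abs x]
      gcongr
    have := (abs_le.1 (abs_bracketPow₃_le zero_le_two ((500 * B)⁻¹ * x + -2))).1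
    nlinarith

lemma exists_bump_third_deriv_ge {B : ℝ} (hB : 1 ≤ B) :
    ∃ (p p₁ p₂ p₃ : ℝ → ℝ) (C : ℝ), HasDerivChain p p₁ p₂ p₃ ∧ Continuous p₃ ∧
      (∀ x, 0 ≤ p x) ∧ (∀ x, p x ≤ C * bracketPow 2 x) ∧ (∀ x, |p₁ x| ≤ C) ∧ (∀ x, |p₂ x| ≤ C) ∧
      (∀ x, |p₃ x| ≤ C) ∧ ∀ x, B - x ^ 2 / 2 ≤ p₃ x := by
  set L := 500 * B with hL
  have hL₁ : 1 ≤ L := by linarith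
  obtain ⟨ℓ, hℓ⟩ : ∃ ℓ, ℓ = 100 * B * L ^ 3 := ⟨_, rfl⟩
  have hℓ₀ : 0 < ℓ := by rw [hℓ]; positivity
  obtain ⟨Q, hQ⟩ : ∃ Q, Q = (1 + 8 * L ^ 2) ^ 2 := ⟨_, rfl⟩
  have hQ₁ : 1 ≤ Q := hQ ▸ one_le_pow₀ (by nlinarith)
  have bound {j : ℕ} {y : ℝ} (hy : |y| ≤ 264) : |ℓ * (L⁻¹ ^ j * y)| ≤ 264 * (ℓ * Q) :=
    calc |ℓ * (L⁻¹ ^ j * y)| = ℓ * (L⁻¹ ^ j * |y|) := by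
          rw [abs_mul, abs_mul, abs_of_pos hℓ₀, abs_of_pos (by positivity)]
      _ ≤ ℓ * (1 * 264) := by
          gcongr
          exact pow_le_one₀ (by positivity) (inv_le_one_of_one_le₀ hL₁)
      _ ≤ 264 * (ℓ * Q) := by nlinarith
  refine ⟨_, _, _, _, 264 * (ℓ * Q),
    ((hasDerivChain_bracketPow 2).comp_affine L⁻¹ (-2)).const_mul ℓ, ?_, fun x ↦ ?_, fun x ↦ ?_,
    fun x ↦ ?_, fun x ↦ bound ?_, fun x ↦ bound ?_, fun x ↦ ?_⟩
  · have := continuous_bracketPow₃ 2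
    fun_prop
  · exact mul_nonneg hℓ₀.le (bracketPow_pos _ _).le
  · have := bracketPow_pos 2 x
    calc ℓ * bracketPow 2 (L⁻¹ * x + -2) ≤ ℓ * (Q * bracketPow 2 x) := by
          rw [hQ]
          gcongr
          exact bracketPow_two_comp_affine_le (by positivity) x
      _ ≤ 264 * (ℓ * Q) * bracketPow 2 x := by
          nlinarith [(by positivity : 0 < ℓ * (Q * bracketPow 2 x))]
  · simpa using bound (j := 1) ((abs_bracketPow₁_le zero_le_two _).trans (by norm_num))
  · exact (abs_bracketPow₂_le zero_le_two _).trans (by norm_num)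
  · exact (abs_bracketPow₃_le zero_le_two _).trans (by norm_num)
  · refine (sub_sq_half_le_mul_bracketPow₃_two hB x).trans_eq ?_
    rw [hℓ, ← hL]
    field_simp

end Bump

section ApproxSolution

variable {a q F X e A : ℝ}

/-- The relative residual of `h` in `h''' = 1 / h³ - (x² + a)`. -/
def relResidual (a : ℝ) (h h₃ : ℝ → ℝ) (x : ℝ) : ℝ := (x ^ 2 + a + h₃ x) * h x ^ 3 - 1

/-- `h` solves `h''' = 1 / h³ - (x² + a)` up to a relative residual of size `O(Y⁹)` that is at
least `-1/2`, and is asymptotic to the profile `Y³`, where `Y` is `weight`. -/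
structure IsApproxSolution (a K : ℝ) (h h₁ h₂ h₃ : ℝ → ℝ) : Prop where
  hasDerivChain : HasDerivChain h h₁ h₂ h₃
  continuous_third : Continuous h₃
  one_le_const : 1 ≤ K
  profile_le : ∀ x, weight x ^ 3 ≤ h x
  sub_profile_le : ∀ x, h x - weight x ^ 3 ≤ K * weight x ^ 4
  le_profile : ∀ x, h x ≤ K * weight x ^ 3
  abs_deriv_le : ∀ x, |h₁ x| ≤ K
  abs_second_deriv_le : ∀ x, |h₂ x| ≤ K
  abs_relResidual_le : ∀ x, |relResidual a h h₃ x| ≤ K * weight x ^ 9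
  neg_half_le_relResidual : ∀ x, -(1 / 2) ≤ relResidual a h h₃ x

lemma abs_mul_cube_sub_one_le (hqX : q * X = 1) (hq : 0 < q) (hq₁ : q ≤ 1) (he : 0 ≤ e)
    (heA : e ≤ A * q) (hF : |F - X| ≤ A) : |F * (q * (1 + e) ^ 3) - 1| ≤ (1 + A) ^ 4 * q := by
  have hA : 0 ≤ A := (abs_nonneg _).trans hF
  have heA' : e ≤ A := heA.trans (mul_le_of_le_one_right hA hq₁)
  calc |F * (q * (1 + e) ^ 3) - 1|
      = |(F - X) * (q * (1 + e) ^ 3) + e * (3 + 3 * e + e ^ 2)| := by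
        congr 1
        linear_combination (1 + e) ^ 3 * hqX
    _ ≤ |F - X| * (q * (1 + e) ^ 3) + e * (3 + 3 * e + e ^ 2) := by
        refine (abs_add_le _ _).trans_eq ?_
        rw [abs_mul, abs_of_nonneg (by positivity : 0 ≤ q * (1 + e) ^ 3),
          abs_of_nonneg (by positivity : 0 ≤ e * (3 + 3 * e + e ^ 2))]
    _ ≤ A * (q * (1 + A) ^ 3) + A * q * (3 + 3 * A + A ^ 2) := by gcongr
    _ ≤ (1 + A) ^ 4 * q := by nlinarith

lemma half_le_mul_cube (hqX : q * X = 1) (hq : 0 < q) (he : 0 ≤ e) (hX : 0 ≤ X)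
    (hF : X / 2 ≤ F) : 1 / 2 ≤ F * (q * (1 + e) ^ 3) :=
  calc 1 / 2 = X / 2 * (q * 1) := by linarith
    _ ≤ F * (q * (1 + e) ^ 3) := by
      gcongr
      · linarith
      · exact one_le_pow₀ (by linarith)

lemma profile_add_cube (x p : ℝ) :
    (weight x ^ 3 + p) ^ 3 = weight x ^ 9 * (1 + p / weight x ^ 3) ^ 3 := by
  have := weight_pos x
  field_simp

lemma isApproxSolution_profile_add {p p₁ p₂ p₃ : ℝ → ℝ} (hp : HasDerivChain p p₁ p₂ p₃)
    (hcont : Continuous p₃) (hp₀ : ∀ x, 0 ≤ p x) (hpA : ∀ x, p x ≤ A * weight x ^ 12)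
    (hp₁ : ∀ x, |bracketPow₁ (1 / 3) x + p₁ x| ≤ A) (hp₂ : ∀ x, |bracketPow₂ (1 / 3) x + p₂ x| ≤ A)
    (hF : ∀ x, |x ^ 2 + a + (bracketPow₃ (1 / 3) x + p₃ x) - (1 + x ^ 2)| ≤ A)
    (hF' : ∀ x, (1 + x ^ 2) / 2 ≤ x ^ 2 + a + (bracketPow₃ (1 / 3) x + p₃ x)) :
    IsApproxSolution a ((1 + A) ^ 4) (fun x ↦ weight x ^ 3 + p x)
      (fun x ↦ bracketPow₁ (1 / 3) x + p₁ x) (fun x ↦ bracketPow₂ (1 / 3) x + p₂ x)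
      (fun x ↦ bracketPow₃ (1 / 3) x + p₃ x) := by
  have hA : 0 ≤ A := (abs_nonneg _).trans (hp₁ 0)
  have hAK : 1 + A ≤ (1 + A) ^ 4 := le_self_pow₀ (by linarith) (by norm_num)
  have profile : (fun x ↦ weight x ^ 3) = bracketPow (1 / 3) := by
    ext x
    rw [weight_pow]
    norm_num
  have hchain := hasDerivChain_bracketPow (1 / 3)
  rw [← profile] at hchain
  have bump_le {j : ℕ} (hj : j ≤ 12) (x : ℝ) : p x ≤ A * weight x ^ j :=
    (hpA x).trans (mul_le_mul_of_nonneg_left (weight_pow_le_weight_pow hj x) hA)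
  have e_nonneg (x : ℝ) : 0 ≤ p x / weight x ^ 3 :=
    div_nonneg (hp₀ x) (pow_pos (weight_pos x) 3).le
  have e_le (x : ℝ) : p x / weight x ^ 3 ≤ A * weight x ^ 9 := by
    rw [div_le_iff₀ (pow_pos (weight_pos x) 3)]
    exact (hpA x).trans_eq (by ring)
  refine ⟨hchain.add hp, (continuous_bracketPow₃ _).add hcont, by linarith,
    fun x ↦ by linarith [hp₀ x], fun x ↦ ?_, fun x ↦ ?_, fun x ↦ by linarith [hp₁ x],
    fun x ↦ by linarith [hp₂ x], fun x ↦ ?_, fun x ↦ ?_⟩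
  · have := pow_pos (weight_pos x) 4
    rw [add_sub_cancel_left]
    exact (bump_le (j := 4) (by norm_num) x).trans (by gcongr; linarith)
  · have := pow_pos (weight_pos x) 3
    calc weight x ^ 3 + p x ≤ (1 + A) * weight x ^ 3 := by
          linarith [bump_le (j := 3) (by norm_num) x]
      _ ≤ (1 + A) ^ 4 * weight x ^ 3 := by gcongr
  · rw [relResidual, profile_add_cube]
    exact abs_mul_cube_sub_one_le (weight_pow_nine_mul x) (pow_pos (weight_pos x) 9)
      (weight_pow_le_one 9 x) (e_nonneg x) (e_le x) (hF x)
  · rw [relResidual, profile_add_cube]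
    linarith [half_le_mul_cube (weight_pow_nine_mul x) (pow_pos (weight_pos x) 9) (e_nonneg x)
      (by positivity) (hF' x)]

theorem exists_isApproxSolution (a : ℝ) : ∃ K h h₁ h₂ h₃, IsApproxSolution a K h h₁ h₂ h₃ := by
  obtain ⟨p, p₁, p₂, p₃, C, hp, hcont, hp₀, hpC, hp₁, hp₂, hp₃, hpB⟩ :=
    exists_bump_third_deriv_ge (B := |a| + 16) (by linarith [abs_nonneg a])
  have third (x : ℝ) : |bracketPow₃ (1 / 3) x| ≤ 14 :=
    (abs_bracketPow₃_le (by norm_num) x).trans (by norm_num)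
  refine ⟨_, _, _, _, _, isApproxSolution_profile_add (a := a) (A := |a| + 15 + C) hp hcont hp₀
    (fun x ↦ ?_) (fun x ↦ ?_) (fun x ↦ ?_) (fun x ↦ ?_) fun x ↦ ?_⟩
  · have hC : 0 ≤ C := (abs_nonneg _).trans (hp₁ 0)
    calc p x ≤ C * bracketPow 2 x := hpC x
      _ = C * weight x ^ 18 := by rw [weight_pow]; norm_num
      _ ≤ (|a| + 15 + C) * weight x ^ 12 := by
        gcongr ?_ * ?_
        · linarith [abs_nonneg a]
        · exact weight_pow_le_weight_pow (by norm_num) x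
  · have := abs_bracketPow₁_le (s := 1 / 3) (by norm_num) x
    linarith [abs_add_le (bracketPow₁ (1 / 3) x) (p₁ x), hp₁ x, abs_nonneg a]
  · have := abs_bracketPow₂_le (s := 1 / 3) (by norm_num) x
    linarith [abs_add_le (bracketPow₂ (1 / 3) x) (p₂ x), hp₂ x, abs_nonneg a]
  · have := abs_le.1 (third x)
    have := abs_le.1 (hp₃ x)
    rw [abs_le]
    constructor <;> linarith [le_abs_self a, neg_abs_le a]
  · linarith [hpB x, (abs_le.1 (third x)).1, neg_abs_le a]

end ApproxSolution

/-! ### The truncated nonlinearity -/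

section TruncInvCube

variable {k s η δ P : ℝ}

/-- The nonlinearity `1 / s³`, frozen below `s = k` so as to be bounded and globally Lipschitz. -/
noncomputable def truncInvCube (k s : ℝ) : ℝ := 1 / max s k ^ 3

lemma truncInvCube_of_le (h : k ≤ s) : truncInvCube k s = 1 / s ^ 3 := by
  rw [truncInvCube, max_eq_left h]

lemma truncInvCube_of_ge (h : s ≤ k) : truncInvCube k s = 1 / k ^ 3 := by
  rw [truncInvCube, max_eq_right h]

lemma eight_le_one_div_cube (hk : 0 < k) (hk₂ : k ≤ 1 / 2) : 8 ≤ 1 / k ^ 3 := by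
  have : k ^ 3 ≤ (1 / 2) ^ 3 := by gcongr
  rw [le_div_iff₀ (by positivity)]
  linarith

lemma one_sub_le_one_div_cube_sub_one (hs : 0 < s) (hs₁ : s ≤ 1) : 1 - s ≤ 1 / s ^ 3 - 1 := by
  have : s ^ 3 ≤ s := pow_le_of_le_one hs.le hs₁ (by norm_num)
  rw [le_sub_iff_add_le, le_div_iff₀ (by positivity)]
  nlinarith [mul_nonneg (pow_pos hs 2).le (sq_nonneg (s - 1))]

lemma min_le_one_sub_one_div_cube (hs : 1 ≤ s) : 3 / 4 * min (s - 1) 1 ≤ 1 - 1 / s ^ 3 := by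
  rcases le_total s 2 with h | h
  · refine (mul_le_mul_of_nonneg_left (min_le_left _ _) (by norm_num)).trans ?_
    rw [le_sub_iff_add_le, ← le_sub_iff_add_le', div_le_iff₀ (by positivity)]
    nlinarith [mul_nonneg (sub_nonneg.2 hs) (sub_nonneg.2 h),
      mul_nonneg (mul_nonneg (sub_nonneg.2 hs) (sub_nonneg.2 h)) (sq_nonneg s)]
  · have : 1 / s ^ 3 ≤ 1 / 2 ^ 3 := by gcongr
    linarith [min_le_right (s - 1) 1]

lemma three_quarters_mul_min_le_abs_one_sub_truncInvCube (hk : 0 < k) (hk₂ : k ≤ 1 / 2) (s : ℝ) :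
    3 / 4 * min |s - 1| 1 ≤ |1 - truncInvCube k s| := by
  rcases le_total 1 s with hs | hs
  · rw [truncInvCube_of_le (by linarith), abs_of_nonneg (sub_nonneg.2 hs)]
    exact (min_le_one_sub_one_div_cube hs).trans (le_abs_self _)
  · rw [abs_sub_comm 1]
    refine le_trans ?_ (le_abs_self _)
    rcases le_total k s with h | h
    · rw [truncInvCube_of_le h, abs_of_nonpos (sub_nonpos.2 hs)]
      linarith [min_le_left (-(s - 1)) 1, one_sub_le_one_div_cube_sub_one (hk.trans_le h) hs]
    · rw [truncInvCube_of_ge h]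
      linarith [min_le_right |s - 1| 1, eight_le_one_div_cube hk hk₂]

lemma sub_one_mul_one_sub_truncInvCube_nonneg (hk : 0 < k) (hk₁ : k ≤ 1) (s : ℝ) :
    0 ≤ (s - 1) * (1 - truncInvCube k s) := by
  have hmax : 0 < max s k := hk.trans_le (le_max_right s k)
  rcases le_total 1 s with hs | hs
  · refine mul_nonneg (sub_nonneg.2 hs) (sub_nonneg.2 ?_)
    exact div_le_one_of_le₀ (one_le_pow₀ (hs.trans (le_max_left s k))) (by positivity)
  · refine mul_nonneg_of_nonpos_of_nonpos (sub_nonpos.2 hs) (sub_nonpos.2 ?_)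
    exact one_le_one_div (by positivity) (pow_le_one₀ hmax.le (max_le hs hk₁))

lemma abs_le_mul_of_mul_abs_lt (hk : 0 < k) (hk₂ : k ≤ 1 / 2) (hkη : (1 + 2 * |η|) * k ^ 3 ≤ 1)
    (hsη : s ≤ 1 ∨ |η| ≤ 1 / 2) (hlt : 4 * |η| < |s - 1|) :
    |η| ≤ 3 / 4 * |1 - truncInvCube k s| := by
  have hmin := three_quarters_mul_min_le_abs_one_sub_truncInvCube hk hk₂ s
  rcases hsη with hs | hη
  · rcases le_total k s with h | h
    · rw [abs_of_nonpos (sub_nonpos.2 hs), min_eq_left (by linarith)] at hmin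
      rw [abs_of_nonpos (sub_nonpos.2 hs)] at hlt
      linarith
    · have : 1 + 2 * |η| ≤ 1 / k ^ 3 := (le_div_iff₀ (by positivity)).2 hkη
      rw [truncInvCube_of_ge h, abs_sub_comm]
      linarith [le_abs_self (1 / k ^ 3 - 1), abs_nonneg η]
  · have : 16 / 9 * |η| ≤ min |s - 1| 1 := le_min (by linarith [abs_nonneg η]) (by linarith)
    linarith

-- `(s - 1) η` is absorbed by `16 η²` when `|s - 1| ≤ 4 |η|`, and otherwise by the main term.
lemma abs_sub_one_mul_abs_one_sub_truncInvCube_le (hk : 0 < k) (hk₂ : k ≤ 1 / 2)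
    (hkη : (1 + 2 * |η|) * k ^ 3 ≤ 1) (hη : -(1 / 2) ≤ η) :
    |s - 1| * |1 - truncInvCube k s| ≤
      4 * ((s - 1) * (1 + η - truncInvCube k s)) + 16 * η ^ 2 := by
  have hmain := sub_one_mul_one_sub_truncInvCube_nonneg hk (by linarith) s
  have hprod : |s - 1| * |1 - truncInvCube k s| = (s - 1) * (1 - truncInvCube k s) := by
    rw [← abs_mul, abs_of_nonneg hmain]
  by_cases hgood : 1 ≤ s ∧ 0 ≤ η
  · nlinarith [mul_nonneg (sub_nonneg.2 hgood.1) hgood.2]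
  have hbad : s ≤ 1 ∨ |η| ≤ 1 / 2 := by
    rw [not_and_or, not_le, not_le] at hgood
    exact hgood.imp le_of_lt fun h ↦ by rw [abs_of_neg h]; linarith
  have hcross : -(|s - 1| * |η|) ≤ (s - 1) * η := by
    rw [← abs_mul]
    exact neg_abs_le _
  have habsorb : 4 * (|s - 1| * |η|) ≤
      3 * (|s - 1| * |1 - truncInvCube k s|) + 16 * η ^ 2 := by
    rcases le_or_gt |s - 1| (4 * |η|) with h | h
    · nlinarith [sq_abs η, abs_nonneg η, mul_nonneg (abs_nonneg (s - 1)) (abs_nonneg η),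
        mul_nonneg (abs_nonneg (s - 1)) (abs_nonneg (1 - truncInvCube k s))]
    · nlinarith [abs_le_mul_of_mul_abs_lt hk hk₂ hkη hbad h, abs_nonneg (s - 1), sq_nonneg η]
  nlinarith

lemma abs_sub_one_le_add_div (hk : 0 < k) (hk₂ : k ≤ 1 / 2) (hδ : 0 < δ) (hδ₁ : δ ≤ 1)
    (hP : |s - 1| * |1 - truncInvCube k s| ≤ P) : |s - 1| ≤ δ + 2 * P / δ := by
  have hP₀ : 0 ≤ P := le_trans (by positivity) hP
  rcases le_or_gt |s - 1| δ with h | h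
  · exact h.trans (le_add_of_nonneg_right (by positivity))
  · have hmin := three_quarters_mul_min_le_abs_one_sub_truncInvCube hk hk₂ s
    have hδmin : δ ≤ min |s - 1| 1 := le_min h.le hδ₁
    refine le_trans ?_ (le_add_of_nonneg_left hδ.le)
    rw [le_div_iff₀ hδ]
    nlinarith [abs_nonneg (s - 1)]

lemma abs_one_sub_one_div_cube_le (hs : 1 / 2 ≤ s) : |1 - 1 / s ^ 3| ≤ 38 * |s - 1| := by
  have hs₀ : 0 < s := by linarith
  have hfactor : 1 - 1 / s ^ 3 = (s - 1) * ((1 + s + s ^ 2) / s ^ 3) := by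
    field_simp
    ring
  have hquot : (1 + s + s ^ 2) / s ^ 3 ≤ 38 := by
    rw [div_le_iff₀ (by positivity)]
    nlinarith [mul_nonneg (sub_nonneg.2 hs) hs₀.le, mul_nonneg (sub_nonneg.2 hs) (sq_nonneg s)]
  rw [hfactor, abs_mul, abs_of_pos (by positivity : 0 < (1 + s + s ^ 2) / s ^ 3), mul_comm 38]
  gcongr

lemma abs_one_sub_truncInvCube_le_add_div (hk₂ : k ≤ 1 / 2) (hδ : 0 < δ) (hδ₂ : δ ≤ 1 / 2)
    (hP : |s - 1| * |1 - truncInvCube k s| ≤ P) :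
    |1 - truncInvCube k s| ≤ 38 * δ + P / δ := by
  have hP₀ : 0 ≤ P := le_trans (by positivity) hP
  rcases le_or_gt |s - 1| δ with h | h
  · have hs : 1 / 2 ≤ s := by linarith [(abs_le.1 h).1]
    rw [truncInvCube_of_le (hk₂.trans hs)]
    exact (abs_one_sub_one_div_cube_le hs).trans
      ((by gcongr : 38 * |s - 1| ≤ 38 * δ).trans (le_add_of_nonneg_right (by positivity)))
  · refine le_trans ?_ (le_add_of_nonneg_left (by positivity))
    rw [le_div_iff₀ hδ]
    nlinarith [abs_nonneg (1 - truncInvCube k s)]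

end TruncInvCube

section TruncField

variable {a k K x u y : ℝ} {h h₁ h₂ h₃ : ℝ → ℝ}

/-- The right-hand side of the equation for `u = H - h` when `H''' = 1 / H³ - (x² + a)`, with `H`
replaced by `k * h` in the nonlinearity where it is smaller than that. -/
noncomputable def truncField (a k : ℝ) (h h₃ : ℝ → ℝ) (x u : ℝ) : ℝ :=
  1 / max (h x + u) (k * h x) ^ 3 - (x ^ 2 + a + h₃ x)

/-- The density that `-u * truncField a k h h₃ x u` controls up to an integrable error. -/
noncomputable def truncDissipation (k : ℝ) (h : ℝ → ℝ) (x u : ℝ) : ℝ :=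
  |u / h x| * |1 - truncInvCube k (1 + u / h x)| / (4 * h x ^ 2)

lemma truncField_eq (hh : 0 < h x) (hk : 0 < k) (u : ℝ) :
    truncField a k h h₃ x u =
      (truncInvCube k (1 + u / h x) - (1 + relResidual a h h₃ x)) / h x ^ 3 := by
  have hmax : max (h x + u) (k * h x) = h x * max (1 + u / h x) k := by
    rw [mul_max_of_nonneg _ _ hh.le, mul_add, mul_one, mul_div_cancel₀ _ hh.ne', mul_comm k]
  have : 0 < max (1 + u / h x) k := hk.trans_le (le_max_right _ _)
  rw [truncField, truncInvCube, relResidual, hmax]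
  field_simp
  ring

lemma truncDissipation_nonneg (k : ℝ) (h : ℝ → ℝ) (x u : ℝ) : 0 ≤ truncDissipation k h x u := by
  unfold truncDissipation
  positivity

lemma abs_mul_abs_eq_mul_truncDissipation (hh : 0 < h x) (k u : ℝ) :
    |u / h x| * |1 - truncInvCube k (1 + u / h x)| = 4 * h x ^ 2 * truncDissipation k h x u := by
  rw [truncDissipation, mul_div_cancel₀ _ (by positivity)]

lemma abs_one_div_cube_sub_one_div_cube_le {m p q : ℝ} (hm : 0 < m) (hp : m ≤ p) (hq : m ≤ q) :
    |1 / p ^ 3 - 1 / q ^ 3| ≤ 3 / m ^ 4 * |p - q| := by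
  have hp₀ : 0 < p := hm.trans_le hp
  have hq₀ : 0 < q := hm.trans_le hq
  have hfactor : 1 / p ^ 3 - 1 / q ^ 3 =
      (1 / (p ^ 3 * q) + 1 / (p ^ 2 * q ^ 2) + 1 / (p * q ^ 3)) * (q - p) := by
    field_simp
    ring
  rw [hfactor, abs_mul, abs_sub_comm q p]
  gcongr
  rw [abs_of_pos (by positivity)]
  calc 1 / (p ^ 3 * q) + 1 / (p ^ 2 * q ^ 2) + 1 / (p * q ^ 3)
      ≤ 1 / (m ^ 3 * m) + 1 / (m ^ 2 * m ^ 2) + 1 / (m * m ^ 3) := by gcongr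
    _ = 3 / m ^ 4 := by field_simp; ring

lemma abs_sub_le_one_of_mem_window {x₀ : ℝ} (hx : x ∈ Set.Icc x₀ (x₀ + weight x₀ ^ 4)) :
    |x - x₀| ≤ 1 := by
  rw [abs_of_nonneg (sub_nonneg.2 hx.1)]
  linarith [hx.2, weight_pow_le_one 4 x₀]

namespace IsApproxSolution

lemma pos (hS : IsApproxSolution a K h h₁ h₂ h₃) (x : ℝ) : 0 < h x :=
  (pow_pos (weight_pos x) 3).trans_le (hS.profile_le x)

lemma weight_pow_nine_le_cube (hS : IsApproxSolution a K h h₁ h₂ h₃) (x : ℝ) :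
    weight x ^ 9 ≤ h x ^ 3 :=
  calc weight x ^ 9 = (weight x ^ 3) ^ 3 := by ring
    _ ≤ h x ^ 3 := pow_le_pow_left₀ (pow_pos (weight_pos x) 3).le (hS.profile_le x) 3

lemma sq_relResidual_div_le (hS : IsApproxSolution a K h h₁ h₂ h₃) (x : ℝ) :
    relResidual a h h₃ x ^ 2 / h x ^ 2 ≤ K ^ 2 / (1 + x ^ 2) := by
  have hw := weight_pos x
  have hK := hS.one_le_const
  have hh := hS.pos x
  have hx : K ^ 2 / (1 + x ^ 2) = K ^ 2 * weight x ^ 9 := by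
    rw [div_eq_iff (by positivity), mul_assoc, weight_pow_nine_mul, mul_one]
  rw [hx, div_le_iff₀ (by positivity)]
  calc relResidual a h h₃ x ^ 2 ≤ (K * weight x ^ 9) ^ 2 := by
        rw [← sq_abs (relResidual a h h₃ x)]
        exact pow_le_pow_left₀ (abs_nonneg _) (hS.abs_relResidual_le x) 2
    _ = K ^ 2 * weight x ^ 9 * weight x ^ 9 := by ring
    _ ≤ K ^ 2 * weight x ^ 9 * weight x ^ 6 := by
        refine mul_le_mul_of_nonneg_left ?_ (by positivity)
        exact weight_pow_le_weight_pow (by norm_num) x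
    _ = K ^ 2 * weight x ^ 9 * (weight x ^ 3) ^ 2 := by ring
    _ ≤ K ^ 2 * weight x ^ 9 * h x ^ 2 := by
        gcongr
        exact hS.profile_le x

lemma abs_relResidual_le_const (hS : IsApproxSolution a K h h₁ h₂ h₃) (x : ℝ) :
    |relResidual a h h₃ x| ≤ K :=
  (hS.abs_relResidual_le x).trans
    (mul_le_of_le_one_right (by linarith [hS.one_le_const]) (weight_pow_le_one 9 x))

lemma mul_truncField_add_truncDissipation_le (hS : IsApproxSolution a K h h₁ h₂ h₃) (hk : 0 < k)
    (hk₂ : k ≤ 1 / 2) (hkK : (1 + 2 * K) * k ^ 3 ≤ 1) (x u : ℝ) :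
    u * truncField a k h h₃ x u + truncDissipation k h x u ≤ 4 * K ^ 2 / (1 + x ^ 2) := by
  have hh := hS.pos x
  set η := relResidual a h h₃ x
  set G := truncInvCube k (1 + u / h x)
  have hη : (1 + 2 * |η|) * k ^ 3 ≤ 1 := by
    refine le_trans ?_ hkK
    gcongr
    exact hS.abs_relResidual_le_const x
  have hcoercive := abs_sub_one_mul_abs_one_sub_truncInvCube_le (s := 1 + u / h x) hk hk₂ hη
    (hS.neg_half_le_relResidual x)
  rw [add_sub_cancel_left, abs_mul_abs_eq_mul_truncDissipation hh] at hcoercive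
  have hE : truncDissipation k h x u ≤
      (4 * (u / h x * (1 + η - G)) + 16 * η ^ 2) / (4 * h x ^ 2) := by
    rw [le_div_iff₀ (by positivity)]
    linarith
  calc u * truncField a k h h₃ x u + truncDissipation k h x u
      ≤ u * ((G - (1 + η)) / h x ^ 3) +
          (4 * (u / h x * (1 + η - G)) + 16 * η ^ 2) / (4 * h x ^ 2) := by
        rw [truncField_eq hh hk]
        gcongr
    _ = 4 * (η ^ 2 / h x ^ 2) := by field_simp; ring
    _ ≤ 4 * K ^ 2 / (1 + x ^ 2) := by
        rw [mul_div_assoc]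
        refine mul_le_mul_of_nonneg_left ?_ zero_le_four
        exact hS.sq_relResidual_div_le x

lemma abs_le_of_weight_pow_three_le (hS : IsApproxSolution a K h h₁ h₂ h₃) (hk : 0 < k)
    (hk₂ : k ≤ 1 / 2) (hy : 0 < y) (hy₁ : y ≤ 1) (hxy : weight x ^ 3 ≤ 3 * y ^ 3) (u : ℝ) :
    |u| ≤ 1000 * K ^ 3 * (y ^ 4 + (y ^ 4) ^ 2 * truncDissipation k h x u) := by
  have hh := hS.pos x
  have hK := hS.one_le_const
  have hE := truncDissipation_nonneg k h x u
  have hle := hS.le_profile x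
  set E := truncDissipation k h x u
  have hhy : h x ≤ 3 * K * y ^ 3 := by nlinarith
  have hs := abs_sub_one_le_add_div (s := 1 + u / h x) (δ := y / 2) (P := 4 * h x ^ 2 * E) hk hk₂
    (by positivity) (by linarith)
    (by rw [add_sub_cancel_left, abs_mul_abs_eq_mul_truncDissipation hh])
  rw [add_sub_cancel_left] at hs
  calc |u| = h x * |u / h x| := by rw [abs_div, abs_of_pos hh, mul_div_cancel₀ _ hh.ne']
    _ ≤ h x * (y / 2 + 2 * (4 * h x ^ 2 * E) / (y / 2)) := by gcongr
    _ = h x * y / 2 + 16 * h x ^ 3 * E / y := by field_simp; ring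
    _ ≤ 3 * K * y ^ 3 * y / 2 + 16 * (3 * K * y ^ 3) ^ 3 * E / y := by gcongr
    _ = 3 / 2 * K * y ^ 4 + 432 * K ^ 3 * ((y ^ 4) ^ 2 * E) := by field_simp; ring
    _ ≤ 1000 * K ^ 3 * y ^ 4 + 1000 * K ^ 3 * ((y ^ 4) ^ 2 * E) := by
        have : K ≤ K ^ 3 := le_self_pow₀ hK (by norm_num)
        gcongr
        · linarith
        · norm_num
    _ = 1000 * K ^ 3 * (y ^ 4 + (y ^ 4) ^ 2 * E) := by ring

lemma abs_truncField_mul_le (hS : IsApproxSolution a K h h₁ h₂ h₃) (hk : 0 < k) (hk₂ : k ≤ 1 / 2)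
    (hy : 0 < y) (hy₁ : y ≤ 1) (hyx : y ^ 3 ≤ 3 * weight x ^ 3) (u : ℝ) :
    |truncField a k h h₃ x u| * (y ^ 4) ^ 2 ≤
      1000 * K ^ 3 * (1 + y ^ 4 * truncDissipation k h x u) := by
  have hh := hS.pos x
  have hK := hS.one_le_const
  have hE := truncDissipation_nonneg k h x u
  set E := truncDissipation k h x u
  set η := relResidual a h h₃ x
  set G := truncInvCube k (1 + u / h x)
  have hyh : y ^ 3 ≤ 3 * h x := hyx.trans (by linarith [hS.profile_le x])
  have hG : |1 - G| ≤ 38 * (y / 2) + 4 * h x ^ 2 * E / (y / 2) :=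
    abs_one_sub_truncInvCube_le_add_div hk₂ (by positivity) (by linarith)
      (by rw [add_sub_cancel_left, abs_mul_abs_eq_mul_truncDissipation hh])
  have hη : |η| ≤ K * h x ^ 3 := (hS.abs_relResidual_le x).trans
    (mul_le_mul_of_nonneg_left (hS.weight_pow_nine_le_cube x) (by linarith))
  calc |truncField a k h h₃ x u| * (y ^ 4) ^ 2 = |(1 - G) + η| / h x ^ 3 * (y ^ 4) ^ 2 := by
        rw [truncField_eq hh hk, abs_div, abs_of_pos (by positivity : 0 < h x ^ 3),
          show G - (1 + η) = -((1 - G) + η) by ring, abs_neg]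
    _ ≤ ((38 * (y / 2) + 4 * h x ^ 2 * E / (y / 2)) + K * h x ^ 3) / h x ^ 3 * (y ^ 4) ^ 2 := by
        gcongr
        exact (abs_add_le _ _).trans (add_le_add hG hη)
    _ = 19 * ((y ^ 3 / h x) ^ 3) + 8 * (y ^ 4 * E) * (y ^ 3 / h x) + K * y ^ 8 := by
        field_simp
        ring
    _ ≤ 19 * 3 ^ 3 + 8 * (y ^ 4 * E) * 3 + K * 1 := by
        have hquot : y ^ 3 / h x ≤ 3 := (div_le_iff₀ hh).2 hyh
        have := pow_le_one₀ (n := 8) hy.le hy₁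
        gcongr
    _ ≤ 1000 * K ^ 3 * (1 + y ^ 4 * E) := by
        have hK₃ : K ≤ K ^ 3 := le_self_pow₀ hK (by norm_num)
        have : 0 ≤ y ^ 4 * E := by positivity
        nlinarith

lemma exists_pos_forall_mem_Icc_le (hS : IsApproxSolution a K h h₁ h₂ h₃) (T : ℝ) :
    ∃ m, 0 < m ∧ ∀ t ∈ Set.Icc (-T) T, m ≤ h t := by
  obtain ⟨m, hm, hle⟩ := (isCompact_Icc (a := -T) (b := T)).exists_forall_le' (f := h)
    hS.hasDerivChain.continuous.continuousOn fun t _ ↦ hS.pos t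
  exact ⟨m, hm, hle⟩

lemma exists_lipschitzWith_truncField (hS : IsApproxSolution a K h h₁ h₂ h₃) (hk : 0 < k) (T : ℝ) :
    ∃ L : NNReal, ∀ t ∈ Set.Icc (-T) T, LipschitzWith L (truncField a k h h₃ t) := by
  obtain ⟨m, hm, hle⟩ := hS.exists_pos_forall_mem_Icc_le T
  refine ⟨⟨3 / (k * m) ^ 4, by positivity⟩, fun t ht ↦ LipschitzWith.of_dist_le_mul fun p q ↦ ?_⟩
  have hkm : k * m ≤ k * h t := mul_le_mul_of_nonneg_left (hle t ht) hk.le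
  rw [Real.dist_eq, Real.dist_eq, truncField, truncField, sub_sub_sub_cancel_right]
  refine (abs_one_div_cube_sub_one_div_cube_le (by positivity) (hkm.trans (le_max_right _ _))
    (hkm.trans (le_max_right _ _))).trans (mul_le_mul_of_nonneg_left ?_ (by positivity))
  simpa using abs_max_sub_max_le_max (h t + p) (k * h t) (h t + q) (k * h t)

lemma exists_abs_truncField_le (hS : IsApproxSolution a K h h₁ h₂ h₃) (hk : 0 < k) (T : ℝ) :
    ∃ M, ∀ t ∈ Set.Icc (-T) T, ∀ u, |truncField a k h h₃ t u| ≤ M := by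
  obtain ⟨m, hm, hle⟩ := hS.exists_pos_forall_mem_Icc_le T
  have hcont := hS.continuous_third
  obtain ⟨B, hB⟩ := (isCompact_Icc (a := -T) (b := T)).exists_bound_of_continuousOn
    (f := fun t ↦ t ^ 2 + a + h₃ t) (by fun_prop)
  refine ⟨1 / (k * m) ^ 3 + B, fun t ht u ↦ (abs_sub _ _).trans (add_le_add ?_ (hB t ht))⟩
  have hkm : k * m ≤ max (h t + u) (k * h t) :=
    (mul_le_mul_of_nonneg_left (hle t ht) hk.le).trans (le_max_right _ _)
  have hkm₀ : 0 < k * m := by positivity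
  have := hkm₀.trans_le hkm
  rw [abs_of_nonneg (by positivity)]
  gcongr

lemma continuous_truncField (hS : IsApproxSolution a K h h₁ h₂ h₃) (hk : 0 < k) (u : ℝ) :
    Continuous fun x ↦ truncField a k h h₃ x u := by
  have := hS.hasDerivChain.continuous
  have := hS.continuous_third
  unfold truncField
  refine (continuous_const.div (by fun_prop) fun x ↦ ?_).sub (by fun_prop)
  exact (pow_pos ((mul_pos hk (hS.pos x)).trans_le (le_max_right _ _)) 3).ne'

theorem dissipativeField (hS : IsApproxSolution a K h h₁ h₂ h₃) (hk : 0 < k) (hk₂ : k ≤ 1 / 2)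
    (hkK : (1 + 2 * K) * k ^ 3 ≤ 1) :
    DissipativeField (truncField a k h h₃) (truncDissipation k h) (fun x ↦ weight x ^ 4)
      (1000 * K ^ 3) where
  continuous_left := hS.continuous_truncField hk
  lipschitz := hS.exists_lipschitzWith_truncField hk
  bounded := hS.exists_abs_truncField_le hk
  rate_nonneg := truncDissipation_nonneg k h
  window_pos x := pow_pos (weight_pos x) 4
  window_le_one := weight_pow_le_one 4
  mul_add_rate_le x u := (hS.mul_truncField_add_truncDissipation_le hk hk₂ hkK x u).trans <| by
    have : K ^ 2 ≤ K ^ 3 := pow_le_pow_right₀ hS.one_le_const (by norm_num)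
    gcongr
    nlinarith [sq_nonneg K]
  abs_le_rate x₀ x hx u := by
    refine hS.abs_le_of_weight_pow_three_le hk hk₂ (weight_pos x₀) (weight_le_one x₀) ?_ u
    exact weight_pow_three_le_mul (abs_sub_le_one_of_mem_window hx)
  abs_field_le x₀ x hx u := by
    refine hS.abs_truncField_mul_le hk hk₂ (weight_pos x₀) (weight_le_one x₀) ?_ u
    exact weight_pow_three_le_mul (abs_sub_comm x x₀ ▸ abs_sub_le_one_of_mem_window hx)

end IsApproxSolution

end TruncField

/-! ### Removing the truncation -/

section Untruncated

variable {a k c s x K M B : ℝ} {h h₁ h₂ h₃ u u₁ u₂ : ℝ → ℝ}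

lemma one_div_le_abs_sub_one_mul_abs_one_sub_truncInvCube (hk : 0 < k) (hkc : k ≤ c)
    (hc : c ≤ 1 / 2) (hs : s ≤ c) :
    1 / (4 * c ^ 3) ≤ |s - 1| * |1 - truncInvCube k s| := by
  have : 0 < max s k := hk.trans_le (le_max_right s k)
  have hG : 1 / c ^ 3 ≤ truncInvCube k s := by
    have := max_le hs hkc
    unfold truncInvCube
    gcongr
  have hs₁ : 1 / 2 ≤ |s - 1| := le_abs.2 (.inr (by linarith))
  have hG₁ : 1 / c ^ 3 / 2 ≤ |1 - truncInvCube k s| :=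
    le_abs.2 (.inr (by linarith [eight_le_one_div_cube (hk.trans_le hkc) hc]))
  calc 1 / (4 * c ^ 3) = 1 / 2 * (1 / c ^ 3 / 2) := by ring
    _ ≤ |s - 1| * |1 - truncInvCube k s| := by
      have := hk.trans_le hkc
      gcongr

/-- An exact positive solution of `H''' = 1 / H³ - (x² + a)` asymptotic to the profile `Y³`, where
`Y` is `weight`, with the bounds on `H` and its derivatives that make the corresponding orbit of
system (D) converge at both ends. -/
structure IsProfileSolution (a C : ℝ) (H H₁ H₂ : ℝ → ℝ) : Prop where
  hasDerivChain : HasDerivChain H H₁ H₂ fun x ↦ 1 / H x ^ 3 - (x ^ 2 + a)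
  pos : ∀ x, 0 < H x
  abs_sub_profile_le : ∀ x, |H x - weight x ^ 3| ≤ C * weight x ^ 4
  abs_deriv_le : ∀ x, |H₁ x| ≤ C
  abs_second_deriv_mul_le : ∀ x, |H₂ x| * weight x ^ 4 ≤ C

namespace IsApproxSolution

lemma one_add_div_le (hS : IsApproxSolution a K h h₁ h₂ h₃) (hu : ∀ t, HasDerivAt u (u₁ t) t)
    (hu₁ : ∀ t, |u₁ t| ≤ M) (hk : 0 ≤ k) {x₀ : ℝ} (hx₀ : h x₀ + u x₀ ≤ k * h x₀)
    (hx : x ∈ Set.Icc x₀ (x₀ + weight x₀ ^ 4)) (hxk : x ≤ x₀ + k * weight x₀ ^ 4) :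
    1 + u x / h x ≤ k * (3 * (2 * K + M)) := by
  have := weight_pos x₀
  have hh := hS.pos x
  have hK := hS.one_le_const
  have hM : 0 ≤ M := (abs_nonneg _).trans (hu₁ 0)
  have hgrowth : h x + u x - (K + M) * x ≤ h x₀ + u x₀ - (K + M) * x₀ :=
    antitoneOn_Icc_of_hasDerivAt_nonpos (a := x₀) (b := x)
      (fun t ↦ ((hS.hasDerivChain.hasDerivAt₀ t).add (hu t)).fun_sub (hasDerivAt_const_mul (K + M)))
      (fun t _ ↦ by linarith [(abs_le.1 (hS.abs_deriv_le t)).2, (abs_le.1 (hu₁ t)).2])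
      (Set.left_mem_Icc.2 hx.1) (Set.right_mem_Icc.2 hx.1) hx.1
  have hsum : h x + u x ≤ k * (3 * (2 * K + M)) * h x :=
    calc h x + u x ≤ k * h x₀ + (K + M) * (x - x₀) := by linarith
      _ ≤ k * (K * weight x₀ ^ 3) + (K + M) * (k * weight x₀ ^ 3) := by
        gcongr
        · exact hS.le_profile x₀
        · have := weight_pow_le_weight_pow (by norm_num : 3 ≤ 4) x₀
          nlinarith
      _ = k * (2 * K + M) * weight x₀ ^ 3 := by ring
      _ ≤ k * (2 * K + M) * (3 * h x) := by
        gcongr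
        have := weight_pow_three_le_mul (abs_sub_comm x x₀ ▸ abs_sub_le_one_of_mem_window hx)
        linarith [hS.profile_le x]
      _ = k * (3 * (2 * K + M)) * h x := by ring
  calc 1 + u x / h x = (h x + u x) / h x := by field_simp
    _ ≤ k * (3 * (2 * K + M)) := (div_le_iff₀ hh).2 hsum

lemma one_div_le_truncDissipation (hS : IsApproxSolution a K h h₁ h₂ h₃) (hk : 0 < k)
    (hkc : k ≤ c) (hc : c ≤ 1 / 2) (hux : 1 + u x / h x ≤ c) {x₀ : ℝ}
    (hx : x ∈ Set.Icc x₀ (x₀ + weight x₀ ^ 4)) :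
    1 / (144 * c ^ 3 * K ^ 2 * weight x₀ ^ 6) ≤ truncDissipation k h x (u x) := by
  have hh := hS.pos x
  have hK := hS.one_le_const
  have hw := weight_pos x₀
  have hc₀ : 0 < c := hk.trans_le hkc
  have hle : h x ≤ 3 * K * weight x₀ ^ 3 := by
    have := weight_pow_three_le_mul (abs_sub_le_one_of_mem_window hx)
    nlinarith [hS.le_profile x]
  have hprod := one_div_le_abs_sub_one_mul_abs_one_sub_truncInvCube hk hkc hc hux
  rw [add_sub_cancel_left] at hprod
  calc 1 / (144 * c ^ 3 * K ^ 2 * weight x₀ ^ 6)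
      = 1 / (4 * c ^ 3) / (4 * (3 * K * weight x₀ ^ 3) ^ 2) := by field_simp; norm_num
    _ ≤ truncDissipation k h x (u x) := by
      unfold truncDissipation
      gcongr

-- Wherever `H` drops to the truncation level it stays comparable to it on a window of length
-- `k Y⁴`, dissipating more than the energy available when `k` is small.
lemma mul_lt_add (hS : IsApproxSolution a K h h₁ h₂ h₃) (hu : ∀ t, HasDerivAt u (u₁ t) t)
    (hu₁ : ∀ t, |u₁ t| ≤ M) (hk : 0 < k) (hk₁ : k ≤ 1) (hkM : k * (3 * (2 * K + M)) ≤ 1 / 2)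
    (hkB : B * (144 * k ^ 2 * (3 * (2 * K + M)) ^ 3 * K ^ 2) < 1)
    (hB : ∀ x y e, x ≤ y → (∀ t ∈ Set.Icc x y, e ≤ truncDissipation k h t (u t)) →
      e * (y - x) ≤ B) (x₀ : ℝ) :
    k * h x₀ < h x₀ + u x₀ := by
  by_contra! hx₀
  have hw := weight_pos x₀
  have hK := hS.one_le_const
  have hM : 0 ≤ M := (abs_nonneg _).trans (hu₁ 0)
  set c := 3 * (2 * K + M)
  have hc₁ : 1 ≤ c := by linarith
  have hwindow : k * weight x₀ ^ 4 ≤ weight x₀ ^ 4 := mul_le_of_le_one_left (by positivity) hk₁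
  have hspent := hB x₀ (x₀ + k * weight x₀ ^ 4) _ (le_add_of_nonneg_right (by positivity))
    fun t ht ↦ by
      have ht' : t ∈ Set.Icc x₀ (x₀ + weight x₀ ^ 4) := ⟨ht.1, ht.2.trans (by gcongr)⟩
      exact hS.one_div_le_truncDissipation hk (le_mul_of_one_le_right hk.le hc₁) hkM
        (hS.one_add_div_le hu hu₁ hk.le hx₀ ht' ht.2) ht'
  have hneeded : 1 / (144 * k ^ 2 * c ^ 3 * K ^ 2) ≤ B :=
    calc 1 / (144 * k ^ 2 * c ^ 3 * K ^ 2)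
        ≤ 1 / (144 * k ^ 2 * c ^ 3 * K ^ 2) / weight x₀ ^ 2 :=
          le_div_self (by positivity) (by positivity) (weight_pow_le_one 2 x₀)
      _ = 1 / (144 * (k * c) ^ 3 * K ^ 2 * weight x₀ ^ 6) *
            (x₀ + k * weight x₀ ^ 4 - x₀) := by field_simp; ring
      _ ≤ B := hspent
  rw [div_le_iff₀ (by positivity)] at hneeded
  linarith

lemma isProfileSolution_add (hS : IsApproxSolution a K h h₁ h₂ h₃)
    (hu : HasDerivChain u u₁ u₂ fun x ↦ truncField a k h h₃ x (u x)) (hk : 0 ≤ k)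
    (huM : ∀ x, |u x| ≤ M * weight x ^ 4 ∧ |u₁ x| ≤ M ∧ |u₂ x| * weight x ^ 4 ≤ M)
    (hlt : ∀ x, k * h x < h x + u x) :
    IsProfileSolution a (K + M) (fun x ↦ h x + u x) (fun x ↦ h₁ x + u₁ x)
      fun x ↦ h₂ x + u₂ x where
  hasDerivChain := by
    convert hS.hasDerivChain.add hu using 2 with x
    rw [truncField, max_eq_left (hlt x).le]
    ring
  pos x := (mul_nonneg hk (hS.pos x).le).trans_lt (hlt x)
  abs_sub_profile_le x := by
    rw [add_sub_right_comm, add_mul]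
    refine (abs_add_le _ _).trans (add_le_add ?_ (huM x).1)
    rw [abs_of_nonneg (sub_nonneg.2 (hS.profile_le x))]
    exact hS.sub_profile_le x
  abs_deriv_le x := (abs_add_le _ _).trans (add_le_add (hS.abs_deriv_le x) (huM x).2.1)
  abs_second_deriv_mul_le x := by
    have hw := pow_pos (weight_pos x) 4
    calc |h₂ x + u₂ x| * weight x ^ 4 ≤ |h₂ x| * weight x ^ 4 + |u₂ x| * weight x ^ 4 := by
          rw [← add_mul]
          gcongr
          exact abs_add_le _ _
      _ ≤ K + M := add_le_add ((mul_le_of_le_one_right (abs_nonneg _)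
          (weight_pow_le_one 4 x)).trans (hS.abs_second_deriv_le x)) (huM x).2.2

end IsApproxSolution

lemma exists_truncation_level (K c B : ℝ) :
    ∃ k : ℝ, 0 < k ∧ k ≤ 1 / 2 ∧ (1 + 2 * K) * k ^ 3 ≤ 1 ∧ k * c ≤ 1 / 2 ∧
      B * (144 * k ^ 2 * c ^ 3 * K ^ 2) < 1 := by
  have small {f : ℝ → ℝ} {b : ℝ} (hf : Continuous f) (h₀ : f 0 < b) : ∀ᶠ k in nhds 0, f k < b :=
    hf.continuousAt.eventually_lt_const h₀
  have hsmall : ∀ᶠ k : ℝ in nhds 0, k < 1 / 2 ∧ (1 + 2 * K) * k ^ 3 < 1 ∧ k * c < 1 / 2 ∧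
      B * (144 * k ^ 2 * c ^ 3 * K ^ 2) < 1 :=
    (small continuous_id (by norm_num)).and <| (small (by fun_prop) (by norm_num)).and <|
      (small (by fun_prop) (by norm_num)).and (small (by fun_prop) (by norm_num))
  obtain ⟨k, ⟨hk₂, hkK, hkc, hkB⟩, hk⟩ :=
    ((hsmall.filter_mono (nhdsWithin_le_nhds (s := Set.Ioi 0))).and self_mem_nhdsWithin).exists
  exact ⟨k, hk, hk₂.le, hkK.le, hkc.le, hkB⟩

theorem exists_isProfileSolution (a : ℝ) : ∃ C H H₁ H₂, IsProfileSolution a C H H₁ H₂ := by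
  obtain ⟨K, h, h₁, h₂, h₃, hS⟩ := exists_isApproxSolution a
  obtain ⟨C, hC⟩ : ∃ C, C = 1000 * K ^ 3 := ⟨_, rfl⟩
  obtain ⟨k, hk, hk₂, hkK, hkM, hkB⟩ :=
    exists_truncation_level K (3 * (2 * K + 100 * C * (1 + 4 * C))) (4 * C)
  have hfield := hS.dissipativeField hk hk₂ hkK
  rw [← hC] at hfield
  obtain ⟨u, u₁, u₂, hu, hbound, hbudget⟩ := hfield.exists_hasDerivChain
  exact ⟨_, _, _, _, hS.isProfileSolution_add hu hk.le hbound
    (hS.mul_lt_add hu.hasDerivAt₀ (fun t ↦ (hbound t).2.1) hk (by linarith) hkM hkB hbudget)⟩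

end Untruncated

/-! ### Return to system (D) -/

section TrigVariables

lemma cos_arctan_rpow (r x : ℝ) : cos (arctan x) ^ r = bracketPow (r / 2) x := by
  rw [cos_arctan, one_div, sqrt_eq_rpow, ← rpow_neg (by positivity), ← rpow_mul (by positivity),
    bracketPow]
  ring_nf

lemma cos_arctan_rpow_eq_weight_pow {r : ℝ} {n : ℕ} (h : 9 * r = 2 * n) (x : ℝ) :
    cos (arctan x) ^ r = weight x ^ n := by
  rw [cos_arctan_rpow, weight_pow, show r / 2 = n / 9 by linarith]

lemma cos_arctan_sq (x : ℝ) : cos (arctan x) ^ 2 = weight x ^ 9 := by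
  rw [← rpow_natCast, cos_arctan_rpow_eq_weight_pow (n := 9) (by norm_num)]

lemma sin_arctan_eq_mul_cos (x : ℝ) : sin (arctan x) = x * cos (arctan x) := by
  rw [sin_arctan, cos_arctan, mul_one_div]

lemma dPsi_arctan (a Φ W Ψ x : ℝ) :
    dPsi a Φ W Ψ (arctan x) = 1 / Φ ^ 3 - 1 - (a - 1) * weight x ^ 9 -
      ((16 / 3 * x - 224 / 27 * x ^ 3 * weight x ^ 9) * weight x ^ 30 * Φ +
        (208 / 81 * x ^ 2 * weight x ^ 9 - 10 / 9) * weight x ^ 17 * W +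
          2 / 3 * x * weight x ^ 13 * Ψ) := by
  have hΦ : cos (arctan x) * cos (arctan x) ^ (17 / 3 : ℝ) = weight x ^ 30 := by
    rw [← rpow_one_add' (cos_arctan_pos x).le (by norm_num)]
    exact cos_arctan_rpow_eq_weight_pow (by norm_num) x
  have hΨ : cos (arctan x) * cos (arctan x) ^ (17 / 9 : ℝ) = weight x ^ 13 := by
    rw [← rpow_one_add' (cos_arctan_pos x).le (by norm_num)]
    exact cos_arctan_rpow_eq_weight_pow (by norm_num) x
  have hW : cos (arctan x) ^ (34 / 9 : ℝ) = weight x ^ 17 :=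
    cos_arctan_rpow_eq_weight_pow (by norm_num) x
  rw [dPsi, sin_arctan_eq_mul_cos, ← hΦ, ← hΨ, ← hW, ← cos_arctan_sq]
  ring

lemma hasDerivAt_arctan_comp_of_weight_pow {g : ℝ → ℝ} {t : ℝ}
    (hg : HasDerivAt g (weight (g t) ^ 4) t) :
    HasDerivAt (fun t ↦ arctan (g t)) (cos (arctan (g t)) ^ (26 / 9 : ℝ)) t := by
  refine hg.arctan.congr_deriv ?_
  rw [cos_arctan_rpow_eq_weight_pow (n := 13) (by norm_num), ← cos_sq_arctan, cos_arctan_sq]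
  ring

lemma tendsto_bracketPow_cocompact {s : ℝ} (hs : 0 < s) :
    Tendsto (bracketPow s) (cocompact ℝ) (nhds 0) := by
  have hsq : Tendsto (fun x : ℝ ↦ 1 + x ^ 2) (cocompact ℝ) atTop := by
    simpa using tendsto_atTop_add_const_left _ (1 : ℝ)
      ((tendsto_pow_atTop two_ne_zero).comp (tendsto_norm_cocompact_atTop (E := ℝ)))
  exact (tendsto_rpow_neg_atTop hs).comp hsq

lemma tendsto_weight_cocompact : Tendsto weight (cocompact ℝ) (nhds 0) :=
  tendsto_bracketPow_cocompact (by norm_num)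

end TrigVariables

section OrbitVariables

variable {a C x b : ℝ} {H H₁ H₂ g : ℝ → ℝ} {l : Filter ℝ}

/-- The variable `Φ` of system (D) at `θ = arctan x`, for the solution with profile `H`. -/
noncomputable def orbitPhi (H : ℝ → ℝ) (x : ℝ) : ℝ := H x / weight x ^ 3

/-- The variable `W = dΦ/dτ` of system (D) at `θ = arctan x`, where `dx/dτ = Y⁴`. -/
noncomputable def orbitW (H H₁ : ℝ → ℝ) (x : ℝ) : ℝ :=
  weight x * H₁ x + 2 / 3 * x * weight x ^ 10 * H x

/-- The variable `Ψ = dW/dτ` of system (D) at `θ = arctan x`, where `dx/dτ = Y⁴`. -/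
noncomputable def orbitPsi (H H₁ H₂ : ℝ → ℝ) (x : ℝ) : ℝ :=
  weight x ^ 5 * H₂ x + 4 / 9 * x * weight x ^ 14 * H₁ x + 2 / 3 * weight x ^ 14 * H x -
    40 / 27 * x ^ 2 * weight x ^ 23 * H x

lemma hasDerivAt_orbitPhi (h : HasDerivAt H (H₁ x) x) :
    HasDerivAt (orbitPhi H) (orbitW H H₁ x / weight x ^ 4) x := by
  have hw := weight_pos x
  refine (h.div (hasDerivAt_weight_pow 3 x) (by positivity)).congr_deriv ?_
  rw [orbitW]
  field_simp
  ring

lemma hasDerivAt_orbitW (h : HasDerivAt H (H₁ x) x) (h₁ : HasDerivAt H₁ (H₂ x) x) :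
    HasDerivAt (orbitW H H₁) (orbitPsi H H₁ H₂ x / weight x ^ 4) x := by
  have := weight_pos x
  have hw₁ : HasDerivAt weight (-(2 / 9) * x * weight x ^ 10) x := by
    simpa using hasDerivAt_weight_pow 1 x
  refine ((hw₁.mul h₁).add ((((hasDerivAt_id x).const_mul (2 / 3)).mul
    (hasDerivAt_weight_pow 10 x)).mul h)).congr_deriv ?_
  simp only [orbitPsi, id, Pi.mul_apply]
  field_simp
  ring

lemma IsProfileSolution.hasDerivAt_orbitPsi (hH : IsProfileSolution a C H H₁ H₂) (x : ℝ) :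
    HasDerivAt (orbitPsi H H₁ H₂)
      (dPsi a (orbitPhi H x) (orbitW H H₁ x) (orbitPsi H H₁ H₂ x) (arctan x) / weight x ^ 4)
      x := by
  have := weight_pos x
  have hpos := hH.pos x
  have h := hH.hasDerivChain.hasDerivAt₀ x
  have h₁ := hH.hasDerivChain.hasDerivAt₁ x
  have h₂ := hH.hasDerivChain.hasDerivAt₂ x
  have hw₁₄ := hasDerivAt_weight_pow 14 x
  refine ((((hasDerivAt_weight_pow 5 x).mul h₂).add
    ((((hasDerivAt_id x).const_mul (4 / 9)).mul hw₁₄).mul h₁)).add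
    ((hw₁₄.const_mul (2 / 3)).mul h)).sub
    ((((hasDerivAt_pow 2 x).const_mul (40 / 27)).mul (hasDerivAt_weight_pow 23 x)).mul h)
    |>.congr_deriv ?_
  have hforcing : 1 / orbitPhi H x ^ 3 - 1 - (a - 1) * weight x ^ 9 =
      weight x ^ 9 * (1 / H x ^ 3 - (x ^ 2 + a)) := by
    rw [orbitPhi, div_pow]
    field_simp
    linear_combination H x ^ 3 * weight_pow_nine_mul x
  rw [eq_div_iff (by positivity), dPsi_arctan, hforcing, orbitPhi, orbitW, orbitPsi]
  simp only [id, Pi.mul_apply]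
  field_simp
  ring

lemma IsProfileSolution.solD (hH : IsProfileSolution a C H H₁ H₂)
    (hg : ∀ t, HasDerivAt g (weight (g t) ^ 4) t) :
    SolD a (fun t ↦ orbitPhi H (g t)) (fun t ↦ orbitW H H₁ (g t))
      (fun t ↦ orbitPsi H H₁ H₂ (g t)) fun t ↦ arctan (g t) := by
  intro t
  have comp {F : ℝ → ℝ} {F' : ℝ} (hF : HasDerivAt F (F' / weight (g t) ^ 4) (g t)) :
      HasDerivAt (fun t ↦ F (g t)) F' t :=
    (hF.comp t (hg t)).congr_deriv (div_mul_cancel₀ _ (pow_pos (weight_pos _) 4).ne')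
  have h := hH.hasDerivChain.hasDerivAt₀ (g t)
  exact ⟨comp (hasDerivAt_orbitPhi h),
    comp (hasDerivAt_orbitW h (hH.hasDerivChain.hasDerivAt₁ (g t))),
    comp (hH.hasDerivAt_orbitPsi (g t)), hasDerivAt_arctan_comp_of_weight_pow (hg t)⟩

namespace IsProfileSolution

lemma orbitPhi_pos (hH : IsProfileSolution a C H H₁ H₂) (x : ℝ) : 0 < orbitPhi H x :=
  div_pos (hH.pos x) (pow_pos (weight_pos x) 3)

lemma nonneg (hH : IsProfileSolution a C H H₁ H₂) : 0 ≤ C :=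
  (abs_nonneg _).trans (hH.abs_deriv_le 0)

lemma abs_le_one_add (hH : IsProfileSolution a C H H₁ H₂) (x : ℝ) : |H x| ≤ 1 + C :=
  calc |H x| = |weight x ^ 3 + (H x - weight x ^ 3)| := by rw [add_sub_cancel]
    _ ≤ |weight x ^ 3| + |H x - weight x ^ 3| := abs_add_le _ _
    _ ≤ 1 + C := add_le_add
        ((abs_of_pos (pow_pos (weight_pos x) 3)).trans_le (weight_pow_le_one 3 x))
        ((hH.abs_sub_profile_le x).trans (mul_le_of_le_one_right hH.nonneg (weight_pow_le_one 4 x)))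

lemma abs_orbitPhi_sub_one_le (hH : IsProfileSolution a C H H₁ H₂) (x : ℝ) :
    |orbitPhi H x - 1| ≤ C * weight x := by
  have hw := pow_pos (weight_pos x) 3
  rw [orbitPhi, div_sub_one hw.ne', abs_div, abs_of_pos hw, div_le_iff₀ hw]
  exact (hH.abs_sub_profile_le x).trans_eq (by ring)

lemma abs_orbitW_le (hH : IsProfileSolution a C H H₁ H₂) (x : ℝ) :
    |orbitW H H₁ x| ≤ (C + 2 / 3 * (1 + C)) * weight x := by
  have hw := weight_pos x
  have hx : |x * weight x ^ 9| ≤ 1 := by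
    simpa using abs_pow_mul_weight_pow_le_one (j := 1) (n := 9) (by norm_num) x
  calc |orbitW H H₁ x| = |H₁ x + 2 / 3 * (x * weight x ^ 9) * H x| * weight x := by
        rw [← abs_of_pos hw, ← abs_mul, abs_of_pos hw, orbitW]
        ring_nf
    _ ≤ (|H₁ x| + 2 / 3 * |x * weight x ^ 9| * |H x|) * weight x := by
        gcongr
        refine (abs_add_le _ _).trans_eq ?_
        rw [abs_mul, abs_mul, abs_of_pos (by norm_num : (0 : ℝ) < 2 / 3)]
    _ ≤ (C + 2 / 3 * 1 * (1 + C)) * weight x := by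
        gcongr
        exacts [hH.abs_deriv_le x, hH.abs_le_one_add x]
    _ = _ := by ring

lemma abs_orbitPsi_le (hH : IsProfileSolution a C H H₁ H₂) (x : ℝ) :
    |orbitPsi H H₁ H₂ x| ≤ (C + 4 / 9 * C + 58 / 27 * (1 + C)) * weight x := by
  have hw := weight_pos x
  have hH₁ : |x * weight x ^ 13| ≤ 1 := by
    simpa using abs_pow_mul_weight_pow_le_one (j := 1) (n := 13) (by norm_num) x
  have hH₀ : |2 / 3 * weight x ^ 13 - 40 / 27 * (x ^ 2 * weight x ^ 22)| ≤ 58 / 27 := by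
    refine (abs_sub _ _).trans ?_
    rw [abs_mul, abs_mul, abs_of_pos (pow_pos hw 13),
      abs_of_pos (by norm_num : (0 : ℝ) < 2 / 3), abs_of_pos (by norm_num : (0 : ℝ) < 40 / 27)]
    linarith [weight_pow_le_one 13 x,
      abs_pow_mul_weight_pow_le_one (j := 2) (n := 22) (by norm_num) x]
  calc |orbitPsi H H₁ H₂ x|
      = |weight x ^ 4 * H₂ x + 4 / 9 * (x * weight x ^ 13) * H₁ x +
          (2 / 3 * weight x ^ 13 - 40 / 27 * (x ^ 2 * weight x ^ 22)) * H x| * weight x := by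
        rw [← abs_of_pos hw, ← abs_mul, abs_of_pos hw, orbitPsi]
        ring_nf
    _ ≤ (|H₂ x| * weight x ^ 4 + 4 / 9 * |x * weight x ^ 13| * |H₁ x| +
          |2 / 3 * weight x ^ 13 - 40 / 27 * (x ^ 2 * weight x ^ 22)| * |H x|) * weight x := by
        gcongr
        refine (abs_add_three _ _ _).trans_eq ?_
        rw [abs_mul, abs_mul, abs_mul (4 / 9), abs_mul, abs_of_pos (pow_pos hw 4),
          abs_of_pos (by norm_num : (0 : ℝ) < 4 / 9), mul_comm (weight x ^ 4), abs_mul]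
    _ ≤ (C + 4 / 9 * 1 * C + 58 / 27 * (1 + C)) * weight x := by
        gcongr
        exacts [hH.abs_second_deriv_mul_le x, hH.abs_deriv_le x, hH.abs_le_one_add x]
    _ = _ := by ring

lemma tendsto_orbit (hH : IsProfileSolution a C H H₁ H₂) (hl : l ≤ cocompact ℝ)
    (hb : Tendsto arctan l (nhds b)) :
    Tendsto (fun x ↦ (orbitPhi H x, orbitW H H₁ x, orbitPsi H H₁ H₂ x, arctan x)) l
      (nhds (1, 0, 0, b)) := by
  have hw (c : ℝ) : Tendsto (fun x ↦ c * weight x) l (nhds 0) := by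
    simpa using (tendsto_weight_cocompact.mono_left hl).const_mul c
  refine .prodMk_nhds ?_ (.prodMk_nhds ?_ (.prodMk_nhds ?_ hb))
  · exact tendsto_iff_norm_sub_tendsto_zero.2
      (squeeze_zero (fun _ ↦ norm_nonneg _) hH.abs_orbitPhi_sub_one_le (hw _))
  · exact squeeze_zero_norm hH.abs_orbitW_le (hw _)
  · exact squeeze_zero_norm hH.abs_orbitPsi_le (hw _)

end IsProfileSolution

end OrbitVariables

/-- for every `a` there is a heteroclinic connection of system (D)
from `p₋ = (1,0,0,-π/2)` to `p₊ = (1,0,0,π/2)`. -/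
theorem exists_heteroclinic (a : ℝ) :
    ∃ Φ W Ψ θ : ℝ → ℝ, SolD a Φ W Ψ θ ∧
      (∀ τ : ℝ, 0 < Φ τ) ∧
      (∀ τ : ℝ, θ τ ∈ Set.Icc (-(Real.pi / 2)) (Real.pi / 2)) ∧
      Tendsto (fun τ => (Φ τ, W τ, Ψ τ, θ τ)) atTop
        (nhds ((1 : ℝ), (0 : ℝ), (0 : ℝ), Real.pi / 2)) ∧
      Tendsto (fun τ => (Φ τ, W τ, Ψ τ, θ τ)) atBot
        (nhds ((1 : ℝ), (0 : ℝ), (0 : ℝ), -(Real.pi / 2))) := by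
  obtain ⟨C, H, H₁, H₂, hH⟩ := exists_isProfileSolution a
  obtain ⟨x, hx, htop, hbot⟩ := exists_hasDerivAt_comp_self_tendsto (continuous_weight.pow 4)
    (fun x ↦ pow_pos (weight_pos x) 4) (weight_pow_le_one 4)
  exact ⟨_, _, _, _, hH.solD hx, fun τ ↦ hH.orbitPhi_pos (x τ),
    fun τ ↦ Set.Ioo_subset_Icc_self (arctan_mem_Ioo (x τ)),
    (hH.tendsto_orbit atTop_le_cocompact
      (tendsto_arctan_atTop.mono_right nhdsWithin_le_nhds)).comp htop,
    (hH.tendsto_orbit atBot_le_cocompact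
      (tendsto_arctan_atBot.mono_right nhdsWithin_le_nhds)).comp hbot⟩
end

section
/- Let τ₀ ∈ ℝ and let Φ : (−∞, τ₀] → ℝ be three times continuously differentiable with Φ(τ) > 0 and Φ'''(τ) = 1/Φ(τ)³ − 1 for all τ ≤ τ₀. If there is a constant C₀ > 1 such that 1/C₀ ≤ Φ(τ) ≤ C₀, |Φ'(τ)| ≤ C₀ and |Φ''(τ)| ≤ C₀ for all τ ≤ τ₀, then Φ(τ) → 1, Φ'(τ) → 0 and Φ''(τ) → 0 as τ → −∞. -/
open Filter Set

/-!
Let `G` be a primitive of `g(x) = 1 / x³ - 1`. Along a solution of `Φ''' = g(Φ)` the energy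
`L = Φ' Φ'' - G(Φ)` satisfies `L' = (Φ'')²`, so it is monotone; being bounded, it converges at `-∞`.
Barbălat's lemma (if `f` converges and `f'` is uniformly continuous, then `f' → 0`) then applies
three times: to `L`, giving `Φ'' → 0`; to `Φ''`, giving `g(Φ) → 0`, hence `Φ → 1` because `1` is the
only zero of `g` in the compact interval containing the values of `Φ`; and to `Φ`, giving `Φ' → 0`.
-/

open scoped Topology

section MeanValue

variable {𝕜 F : Type*} [RCLike 𝕜] [NormedAddCommGroup F] [NormedSpace 𝕜 F] {f f' : 𝕜 → F}
  {s : Set 𝕜} {C : ℝ}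

theorem uniformContinuousOn_of_norm_hasDerivWithinAt_le (hs : Convex ℝ s)
    (hf : ∀ x ∈ s, HasDerivWithinAt f (f' x) s x) (hC : ∀ x ∈ s, ‖f' x‖ ≤ C) :
    UniformContinuousOn f s :=
  (hs.lipschitzOnWith_of_nnnorm_hasDerivWithin_le hf
    fun x hx ↦ NNReal.le_toNNReal_of_coe_le (hC x hx)).uniformContinuousOn

theorem norm_image_sub_sub_smul_le_of_norm_hasDerivWithinAt_sub_le {v : F} {x y : 𝕜}
    (hs : Convex ℝ s) (hf : ∀ z ∈ s, HasDerivWithinAt f (f' z) s z)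
    (hC : ∀ z ∈ s, ‖f' z - v‖ ≤ C) (hx : x ∈ s) (hy : y ∈ s) :
    ‖f y - f x - (y - x) • v‖ ≤ C * ‖y - x‖ := by
  have hg : ∀ z ∈ s, HasDerivWithinAt (fun z ↦ f z - z • v) (f' z - v) s z := fun z hz ↦ by
    simpa using (hf z hz).fun_sub ((hasDerivWithinAt_id z s).smul_const v)
  convert hs.norm_image_sub_le_of_norm_hasDerivWithin_le hg hC hx hy using 2
  module

end MeanValue

section Calculus

variable {E : Type*} [NormedAddCommGroup E] [NormedSpace ℝ E]

/-- Barbălat's lemma at `-∞`. -/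
theorem tendsto_deriv_atBot_zero_of_uniformContinuousOn {f f' : ℝ → E} {t : ℝ} {a : E}
    (hf : ∀ x ∈ Iic t, HasDerivWithinAt f (f' x) (Iic t) x)
    (hf' : UniformContinuousOn f' (Iic t)) (ha : Tendsto f atBot (𝓝 a)) :
    Tendsto f' atBot (𝓝 0) := by
  rw [Metric.tendsto_nhds]
  intro ε hε
  obtain ⟨δ, hδ, hosc⟩ := Metric.uniformContinuousOn_iff_le.1 hf' (ε / 2) (half_pos hε)
  have hincr : Tendsto (fun x ↦ ‖f x - f (x - δ)‖) atBot (𝓝 0) := by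
    have hshift : Tendsto (fun x : ℝ ↦ x - δ) atBot atBot :=
      tendsto_atBot_add_const_right _ (-δ) tendsto_id
    simpa using (ha.sub (ha.comp hshift)).norm
  filter_upwards [hincr.eventually_lt_const (show 0 < ε / 2 * δ by positivity),
    eventually_le_atBot t] with x hx hxt
  have hsub : Icc (x - δ) x ⊆ Iic t := fun y hy ↦ hy.2.trans hxt
  have hosc_Icc : ∀ y ∈ Icc (x - δ) x, ‖f' y - f' x‖ ≤ ε / 2 := fun y hy ↦ by
    rw [← dist_eq_norm]
    refine hosc y (hsub hy) x hxt ?_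
    rw [Real.dist_eq, abs_le]
    constructor <;> linarith [hy.1, hy.2]
  have hlin : ‖f x - f (x - δ) - δ • f' x‖ ≤ ε / 2 * δ := by
    simpa [abs_of_pos hδ] using norm_image_sub_sub_smul_le_of_norm_hasDerivWithinAt_sub_le
      (convex_Icc (x - δ) x) (fun y hy ↦ (hf y (hsub hy)).mono hsub) hosc_Icc
      (left_mem_Icc.2 (by linarith)) (right_mem_Icc.2 (by linarith))
  have hslope : δ * ‖f' x‖ < δ * ε := calc
    δ * ‖f' x‖ = ‖δ • f' x‖ := (norm_smul_of_nonneg hδ.le _).symm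
    _ ≤ ‖f x - f (x - δ)‖ + ‖f x - f (x - δ) - δ • f' x‖ := norm_le_norm_add_norm_sub _ _
    _ < ε / 2 * δ + ε / 2 * δ := add_lt_add_of_lt_of_le hx hlin
    _ = δ * ε := by ring
  rw [dist_zero_right]
  exact lt_of_mul_lt_mul_left hslope hδ.le

theorem exists_forall_hasDerivWithinAt_Icc [CompleteSpace E] {g : ℝ → E} {a b : ℝ}
    (hg : ContinuousOn g (Icc a b)) :
    ∃ G : ℝ → E, ∀ x ∈ Icc a b, HasDerivWithinAt G (g x) (Icc a b) x := by
  refine ⟨fun u ↦ ∫ x in a..u, g x, fun x hx ↦ ?_⟩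
  have := Fact.mk hx
  exact intervalIntegral.integral_hasDerivWithinAt_right
    ((hg.mono (Icc_subset_Icc_right hx.2)).intervalIntegrable_of_Icc hx.1)
    (hg.stronglyMeasurableAtFilter_nhdsWithin measurableSet_Icc x) (hg x hx)

end Calculus

theorem tendsto_atBot_sInf_image_of_monotoneOn_Iic {α β : Type*} [LinearOrder α]
    [ConditionallyCompleteLinearOrder β] [TopologicalSpace β] [OrderTopology β]
    {f : α → β} {t : α} (hf : MonotoneOn f (Iic t)) (hbdd : BddBelow (f '' Iic t)) :
    Tendsto f atBot (𝓝 (sInf (f '' Iic t))) := by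
  have hmono : Monotone fun x ↦ f (min x t) := fun x y hxy ↦
    hf (min_le_right x t) (min_le_right y t) (min_le_min_right t hxy)
  have hrange : range (fun x ↦ f (min x t)) = f '' Iic t := by
    ext y
    constructor
    · rintro ⟨x, rfl⟩
      exact ⟨min x t, min_le_right x t, rfl⟩
    · rintro ⟨x, hx, rfl⟩
      exact ⟨x, by simp only [min_eq_left (mem_Iic.1 hx)]⟩
  rw [← hrange] at hbdd ⊢
  refine (tendsto_atBot_ciInf hmono hbdd).congr' ?_
  filter_upwards [eventually_le_atBot t] with x hx
  rw [min_eq_left hx]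

theorem tendsto_of_tendsto_comp_of_isCompact {ι X Y : Type*} [TopologicalSpace X]
    [TopologicalSpace Y] [T2Space Y] {l : Filter ι} {f : ι → X} {g : X → Y} {K : Set X} {p : X}
    {c : Y} (hK : IsCompact K) (hg : ContinuousOn g K) (hfK : ∀ᶠ i in l, f i ∈ K)
    (hgf : Tendsto (g ∘ f) l (𝓝 c)) (hp : ∀ x ∈ K, g x = c → x = p) : Tendsto f l (𝓝 p) := by
  refine hK.tendsto_nhds_of_unique_mapClusterPt hfK fun x hx hclus ↦ hp x hx ?_
  have hgx : MapClusterPt (g x) l (g ∘ f) :=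
    hclus.tendsto_comp' ((hg x hx).mono_left (inf_le_inf_left _ (le_principal_iff.2 hfK)))
  exact eq_of_nhds_neBot (hgx.neBot.mono (inf_le_inf_left _ hgf))

/-- `Φ` solves the autonomous third-order equation `Φ''' = g(Φ)` on `s`, with velocity `Φ' = W`
and acceleration `Φ'' = Ψ`. Derivatives are taken within `s`, hence one-sided at its endpoints. -/
structure IsJerkSolutionOn (g Φ W Ψ : ℝ → ℝ) (s : Set ℝ) : Prop where
  hasDerivWithinAt_position : ∀ τ ∈ s, HasDerivWithinAt Φ (W τ) s τ
  hasDerivWithinAt_velocity : ∀ τ ∈ s, HasDerivWithinAt W (Ψ τ) s τ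
  hasDerivWithinAt_acceleration : ∀ τ ∈ s, HasDerivWithinAt Ψ (g (Φ τ)) s τ

/-- The Lyapunov function `Φ' Φ'' - G(Φ)` of `Φ''' = g(Φ)`, where `G` is a primitive of `g`;
for `g(x) = 1 / x³ - 1` it is `Φ' Φ'' + 1 / (2Φ²) + Φ`, up to an additive constant. -/
def jerkEnergy (G Φ W Ψ : ℝ → ℝ) (τ : ℝ) : ℝ := W τ * Ψ τ - G (Φ τ)

theorem bddBelow_image_jerkEnergy {G Φ W Ψ : ℝ → ℝ} {s K : Set ℝ} {C : ℝ} (hK : IsCompact K)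
    (hG : ContinuousOn G K) (hΦ : MapsTo Φ s K) (hW : ∀ τ ∈ s, |W τ| ≤ C)
    (hΨ : ∀ τ ∈ s, |Ψ τ| ≤ C) : BddBelow (jerkEnergy G Φ W Ψ '' s) := by
  obtain ⟨B, hB⟩ := hK.bddAbove_image hG
  refine ⟨-(C * C) - B, forall_mem_image.2 fun τ hτ ↦ ?_⟩
  have hGB : G (Φ τ) ≤ B := hB (mem_image_of_mem G (hΦ hτ))
  have hWΨ : |W τ * Ψ τ| ≤ C * C := by
    rw [abs_mul]
    exact mul_le_mul (hW τ hτ) (hΨ τ hτ) (abs_nonneg _) ((abs_nonneg _).trans (hW τ hτ))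
  exact sub_le_sub (abs_le.1 hWΨ).1 hGB

namespace IsJerkSolutionOn

variable {g G Φ W Ψ : ℝ → ℝ} {s K : Set ℝ} {a b t C : ℝ}

theorem uniformContinuousOn_acceleration (h : IsJerkSolutionOn g Φ W Ψ s) (hs : Convex ℝ s)
    (hK : IsCompact K) (hg : ContinuousOn g K) (hΦ : MapsTo Φ s K) : UniformContinuousOn Ψ s := by
  obtain ⟨B, hB⟩ := hK.exists_bound_of_continuousOn hg
  exact uniformContinuousOn_of_norm_hasDerivWithinAt_le hs h.hasDerivWithinAt_acceleration
    fun τ hτ ↦ hB _ (hΦ hτ)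

theorem hasDerivWithinAt_jerkEnergy (h : IsJerkSolutionOn g Φ W Ψ s)
    (hG : ∀ x ∈ K, HasDerivWithinAt G (g x) K x) (hΦ : MapsTo Φ s K) {τ : ℝ} (hτ : τ ∈ s) :
    HasDerivWithinAt (jerkEnergy G Φ W Ψ) (Ψ τ ^ 2) s τ :=
  (((h.hasDerivWithinAt_velocity τ hτ).mul (h.hasDerivWithinAt_acceleration τ hτ)).sub
    ((hG _ (hΦ hτ)).comp τ (h.hasDerivWithinAt_position τ hτ) hΦ)).congr_deriv (by ring)

theorem monotoneOn_jerkEnergy (h : IsJerkSolutionOn g Φ W Ψ s) (hs : Convex ℝ s)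
    (hG : ∀ x ∈ K, HasDerivWithinAt G (g x) K x) (hΦ : MapsTo Φ s K) :
    MonotoneOn (jerkEnergy G Φ W Ψ) s :=
  monotoneOn_of_hasDerivWithinAt_nonneg hs
    (fun _ hτ ↦ (h.hasDerivWithinAt_jerkEnergy hG hΦ hτ).continuousWithinAt)
    (fun _ hτ ↦ (h.hasDerivWithinAt_jerkEnergy hG hΦ (interior_subset hτ)).mono interior_subset)
    (fun τ _ ↦ sq_nonneg (Ψ τ))

theorem tendsto_acceleration_atBot (h : IsJerkSolutionOn g Φ W Ψ (Iic t))
    (hg : ContinuousOn g (Icc a b)) (hΦ : MapsTo Φ (Iic t) (Icc a b))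
    (hW : ∀ τ ≤ t, |W τ| ≤ C) (hΨ : ∀ τ ≤ t, |Ψ τ| ≤ C) : Tendsto Ψ atBot (𝓝 0) := by
  obtain ⟨G, hG⟩ := exists_forall_hasDerivWithinAt_Icc hg
  have henergy := tendsto_atBot_sInf_image_of_monotoneOn_Iic
    (h.monotoneOn_jerkEnergy (convex_Iic t) hG hΦ)
    (bddBelow_image_jerkEnergy isCompact_Icc (HasDerivWithinAt.continuousOn hG) hΦ hW hΨ)
  have hsq_uc : UniformContinuousOn (fun τ ↦ Ψ τ ^ 2) (Iic t) :=
    (isCompact_Icc.uniformContinuousOn_of_continuous (continuous_pow 2).continuousOn).comp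
      (h.uniformContinuousOn_acceleration (convex_Iic t) isCompact_Icc hg hΦ)
      fun τ hτ ↦ abs_le.1 (hΨ τ hτ)
  have hsq : Tendsto (fun τ ↦ Ψ τ ^ 2) atBot (𝓝 0) :=
    tendsto_deriv_atBot_zero_of_uniformContinuousOn
      (fun _ hτ ↦ h.hasDerivWithinAt_jerkEnergy hG hΦ hτ) hsq_uc henergy
  refine (tendsto_zero_iff_abs_tendsto_zero Ψ).2 ?_
  simpa [Real.sqrt_sq_eq_abs, Function.comp_def] using hsq.sqrt

theorem tendsto_jerk_atBot (h : IsJerkSolutionOn g Φ W Ψ (Iic t))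
    (hg : ContinuousOn g (Icc a b)) (hΦ : MapsTo Φ (Iic t) (Icc a b))
    (hW : ∀ τ ≤ t, |W τ| ≤ C) (hΨ : ∀ τ ≤ t, |Ψ τ| ≤ C) : Tendsto (g ∘ Φ) atBot (𝓝 0) :=
  have hΦ_uc : UniformContinuousOn Φ (Iic t) :=
    uniformContinuousOn_of_norm_hasDerivWithinAt_le (convex_Iic t) h.hasDerivWithinAt_position hW
  tendsto_deriv_atBot_zero_of_uniformContinuousOn h.hasDerivWithinAt_acceleration
    ((isCompact_Icc.uniformContinuousOn_of_continuous hg).comp hΦ_uc hΦ)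
    (h.tendsto_acceleration_atBot hg hΦ hW hΨ)

end IsJerkSolutionOn

theorem tendsto_critical_point_of_bounded_general {g Φ W Ψ : ℝ → ℝ} {a b t p C : ℝ}
    (h : IsJerkSolutionOn g Φ W Ψ (Iic t)) (hg : ContinuousOn g (Icc a b))
    (hp : ∀ x ∈ Icc a b, g x = 0 → x = p) (hΦ : MapsTo Φ (Iic t) (Icc a b))
    (hW : ∀ τ ≤ t, |W τ| ≤ C) (hΨ : ∀ τ ≤ t, |Ψ τ| ≤ C) :
    Tendsto Φ atBot (𝓝 p) ∧ Tendsto W atBot (𝓝 0) ∧ Tendsto Ψ atBot (𝓝 0) := by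
  have hΦp : Tendsto Φ atBot (𝓝 p) :=
    tendsto_of_tendsto_comp_of_isCompact isCompact_Icc hg ((eventually_le_atBot t).mono hΦ)
      (h.tendsto_jerk_atBot hg hΦ hW hΨ) hp
  have hW_uc : UniformContinuousOn W (Iic t) :=
    uniformContinuousOn_of_norm_hasDerivWithinAt_le (convex_Iic t) h.hasDerivWithinAt_velocity hΨ
  exact ⟨hΦp, tendsto_deriv_atBot_zero_of_uniformContinuousOn h.hasDerivWithinAt_position hW_uc hΦp,
    h.tendsto_acceleration_atBot hg hΦ hW hΨ⟩

theorem continuousOn_one_div_pow_three_sub_one :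
    ContinuousOn (fun x : ℝ ↦ 1 / x ^ 3 - 1) {0}ᶜ :=
  (continuousOn_const.div (continuous_pow 3).continuousOn fun _ hx ↦ pow_ne_zero 3 hx).sub
    continuousOn_const

theorem one_div_pow_three_sub_one_eq_zero_iff {x : ℝ} (hx : 0 ≤ x) :
    1 / x ^ 3 - 1 = 0 ↔ x = 1 := by
  rw [sub_eq_zero, one_div, inv_eq_one, pow_eq_one_iff_of_nonneg hx three_ne_zero]

/-- if a positive solution of `Φ''' = 1/Φ³ - 1` on `(-∞, τ₀]` stays (together with
its first two derivatives) in a compact region `1/C₀ ≤ Φ ≤ C₀`, `|Φ'| ≤ C₀`, `|Φ''| ≤ C₀`,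
then `(Φ, Φ', Φ'') → (1, 0, 0)` as `τ → -∞`. -/
theorem tendsto_critical_point_of_bounded (τ₀ : ℝ) (Φ W Ψ : ℝ → ℝ)
    (hΦpos : ∀ τ ≤ τ₀, 0 < Φ τ)
    (hΦ : ∀ τ ∈ Set.Iic τ₀, HasDerivWithinAt Φ (W τ) (Set.Iic τ₀) τ)
    (hW : ∀ τ ∈ Set.Iic τ₀, HasDerivWithinAt W (Ψ τ) (Set.Iic τ₀) τ)
    (hΨ : ∀ τ ∈ Set.Iic τ₀,
      HasDerivWithinAt Ψ (1 / (Φ τ) ^ 3 - 1) (Set.Iic τ₀) τ)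
    (C₀ : ℝ) (hC₀ : 1 < C₀)
    (hbound : ∀ τ ≤ τ₀, 1 / C₀ ≤ Φ τ ∧ Φ τ ≤ C₀ ∧ |W τ| ≤ C₀ ∧ |Ψ τ| ≤ C₀) :
    Tendsto Φ atBot (nhds 1) ∧ Tendsto W atBot (nhds 0) ∧ Tendsto Ψ atBot (nhds 0) := by
  have hpos : ∀ x ∈ Icc (1 / C₀) C₀, 0 < x := fun x hx ↦
    (one_div_pos.2 (zero_lt_one.trans hC₀)).trans_le hx.1
  exact tendsto_critical_point_of_bounded_general ⟨hΦ, hW, hΨ⟩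
    (continuousOn_one_div_pow_three_sub_one.mono fun x hx ↦ (hpos x hx).ne')
    (fun x hx ↦ (one_div_pow_three_sub_one_eq_zero_iff (hpos x hx).le).1)
    (fun τ hτ ↦ ⟨(hbound τ hτ).1, (hbound τ hτ).2.1⟩)
    (fun τ hτ ↦ (hbound τ hτ).2.2.1) (fun τ hτ ↦ (hbound τ hτ).2.2.2)
end

section
/- Let Φ be a three times continuously differentiable positive function defined on an interval (−∞, τ₀] satisfying Φ'''(τ) = 1/Φ(τ)³ − 1 for all τ ≤ τ₀. If Φ(τ) → +∞, Φ'(τ) → −∞ and Φ''(τ) → +∞ as τ → −∞, then Φ(τ)/τ³ → −1/6 as τ → −∞. -/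
/-!
The ratio `f / g` inherits the limit of `f' / g'` when `g → +∞` is increasing (l'Hôpital's rule),
because an inequality `‖f'‖ ≤ c * g'` integrates to `‖f‖ ≤ c * g + const` and the constant is
absorbed by `g`. Since `Φ → +∞`, the equation gives `Φ''' → -1`, and three applications of the rule
against `τ`, `τ ^ 2`, `τ ^ 3`, each transferred to `-∞` by the reflection `τ ↦ -τ`, yield
`Φ'' / τ → -1`, `Φ' / τ ^ 2 → -1 / 2`, `Φ / τ ^ 3 → -1 / 6`.
-/

open Filter Set

open scoped Asymptotics Topology

theorem div_neg_pow {K : Type*} [DivisionRing K] (x a : K) (n : ℕ) :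
    x / (-a) ^ n = (-1) ^ n * x / a ^ n := by
  obtain hn | hn := n.even_or_odd <;> simp [hn.neg_pow, div_neg, neg_div]

section Derivatives

variable {E : Type*} [NormedAddCommGroup E] [NormedSpace ℝ E] {f f' : ℝ → E}

theorem eventually_hasDerivAt_atBot_of_hasDerivWithinAt_Iic {a : ℝ}
    (hf : ∀ t ∈ Iic a, HasDerivWithinAt f (f' t) (Iic a) t) :
    ∀ᶠ t in atBot, HasDerivAt f (f' t) t := by
  filter_upwards [eventually_lt_atBot a] with t ht
  exact (hf t ht.le).hasDerivAt (Iic_mem_nhds ht)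

theorem norm_le_norm_add_sub_of_norm_deriv_le {g g' : ℝ → ℝ} {a b : ℝ} (hab : a ≤ b)
    (hf : ∀ x ∈ Icc a b, HasDerivAt f (f' x) x) (hg : ∀ x ∈ Icc a b, HasDerivAt g (g' x) x)
    (hle : ∀ x ∈ Icc a b, ‖f' x‖ ≤ g' x) : ‖f b‖ ≤ ‖f a‖ + (g b - g a) := by
  have hB : ∀ x ∈ Icc a b, HasDerivAt (fun x ↦ ‖f a‖ + (g x - g a)) (g' x) x :=
    fun x hx ↦ ((hg x hx).sub_const _).const_add _
  exact image_norm_le_of_norm_deriv_right_le_deriv_boundary'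
    (fun x hx ↦ (hf x hx).continuousAt.continuousWithinAt)
    (fun x hx ↦ (hf x (Ico_subset_Icc_self hx)).hasDerivWithinAt) (by simp)
    (fun x hx ↦ (hB x hx).continuousAt.continuousWithinAt)
    (fun x hx ↦ (hB x (Ico_subset_Icc_self hx)).hasDerivWithinAt)
    (fun x hx ↦ hle x (Ico_subset_Icc_self hx)) (right_mem_Icc.2 hab)

theorem isLittleO_atTop_of_isLittleO_deriv {g g' : ℝ → ℝ}
    (hf : ∀ᶠ t in atTop, HasDerivAt f (f' t) t) (hg : ∀ᶠ t in atTop, HasDerivAt g (g' t) t)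
    (hg'_nonneg : ∀ᶠ t in atTop, 0 ≤ g' t) (hg_atTop : Tendsto g atTop atTop)
    (h : f' =o[atTop] g') : f =o[atTop] g := by
  refine Asymptotics.isLittleO_iff.2 fun c hc ↦ ?_
  have hbound : ∀ᶠ t in atTop, ‖f' t‖ ≤ c / 2 * g' t := by
    filter_upwards [h.bound (half_pos hc), hg'_nonneg] with t ht hg't
    rwa [Real.norm_of_nonneg hg't] at ht
  obtain ⟨T, hT⟩ := eventually_atTop.1 (hf.and (hg.and hbound))
  have hconst : ∀ᶠ t in atTop, ‖f T‖ - c / 2 * g T ≤ c / 2 * g t :=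
    (hg_atTop.const_mul_atTop (half_pos hc)).eventually_ge_atTop _
  filter_upwards [eventually_ge_atTop T, hconst, hg_atTop.eventually_ge_atTop 0]
    with t hTt hconst_t hgt
  have hmv : ‖f t‖ ≤ ‖f T‖ + (c / 2 * g t - c / 2 * g T) :=
    norm_le_norm_add_sub_of_norm_deriv_le (g := fun x ↦ c / 2 * g x) hTt
      (fun x hx ↦ (hT x hx.1).1) (fun x hx ↦ (hT x hx.1).2.1.const_mul _)
      (fun x hx ↦ (hT x hx.1).2.2)
  rw [Real.norm_of_nonneg hgt]
  linarith

end Derivatives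

section LHopital

variable {f f' : ℝ → ℝ} {c : ℝ}

theorem tendsto_div_atTop_of_tendsto_deriv_div {g g' : ℝ → ℝ}
    (hf : ∀ᶠ t in atTop, HasDerivAt f (f' t) t) (hg : ∀ᶠ t in atTop, HasDerivAt g (g' t) t)
    (hg'_pos : ∀ᶠ t in atTop, 0 < g' t) (hg_atTop : Tendsto g atTop atTop)
    (h : Tendsto (fun t ↦ f' t / g' t) atTop (𝓝 c)) :
    Tendsto (fun t ↦ f t / g t) atTop (𝓝 c) := by
  have hderiv : (fun t ↦ f' t - c * g' t) =o[atTop] g' := by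
    rw [Asymptotics.isLittleO_iff_tendsto' (hg'_pos.mono fun t ht h0 ↦ absurd h0 ht.ne')]
    have hsub : Tendsto (fun t ↦ f' t / g' t - c) atTop (𝓝 0) := by
      simpa using h.sub_const c
    refine hsub.congr' ?_
    filter_upwards [hg'_pos] with t ht
    rw [sub_div, mul_div_cancel_right₀ _ ht.ne']
  have hlittleO : (fun t ↦ f t - c * g t) =o[atTop] g :=
    isLittleO_atTop_of_isLittleO_deriv
      ((hf.and hg).mono fun t ht ↦ ht.1.sub (ht.2.const_mul c)) hg
      (hg'_pos.mono fun _ ht ↦ ht.le) hg_atTop hderiv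
  have hadd : Tendsto (fun t ↦ (f t - c * g t) / g t + c) atTop (𝓝 c) := by
    simpa using hlittleO.tendsto_div_nhds_zero.add_const c
  refine hadd.congr' ?_
  filter_upwards [hg_atTop.eventually_gt_atTop 0] with t ht
  rw [sub_div, mul_div_cancel_right₀ _ ht.ne', sub_add_cancel]

theorem tendsto_div_pow_succ_atTop_of_tendsto_deriv_div_pow {n : ℕ}
    (hf : ∀ᶠ t in atTop, HasDerivAt f (f' t) t)
    (h : Tendsto (fun t ↦ f' t / t ^ n) atTop (𝓝 c)) :
    Tendsto (fun t ↦ f t / t ^ (n + 1)) atTop (𝓝 (c / (n + 1))) := by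
  refine tendsto_div_atTop_of_tendsto_deriv_div (g' := fun t ↦ (n + 1) * t ^ n) hf
    (.of_forall fun t ↦ by simpa using hasDerivAt_pow (n + 1) t) ?_
    (tendsto_pow_atTop n.succ_ne_zero) ?_
  · filter_upwards [eventually_gt_atTop 0] with t ht
    positivity
  · simpa only [div_div, mul_comm] using h.div_const ((n : ℝ) + 1)

theorem tendsto_div_pow_succ_atBot_of_tendsto_deriv_div_pow {n : ℕ}
    (hf : ∀ᶠ t in atBot, HasDerivAt f (f' t) t)
    (h : Tendsto (fun t ↦ f' t / t ^ n) atBot (𝓝 c)) :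
    Tendsto (fun t ↦ f t / t ^ (n + 1)) atBot (𝓝 (c / (n + 1))) := by
  have hderiv : ∀ᶠ s in atTop,
      HasDerivAt (fun s ↦ (-1) ^ (n + 1) * f (-s)) ((-1) ^ (n + 1) * -f' (-s)) s := by
    filter_upwards [tendsto_neg_atTop_atBot.eventually hf] with s hs
    simpa using (hs.comp s (hasDerivAt_neg s)).const_mul ((-1) ^ (n + 1))
  have hquot : Tendsto (fun s ↦ (-1) ^ (n + 1) * -f' (-s) / s ^ n) atTop (𝓝 c) := by
    refine (h.comp tendsto_neg_atTop_atBot).congr fun s ↦ ?_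
    rw [Function.comp_apply, div_neg_pow, pow_succ, mul_assoc, neg_one_mul, neg_neg]
  refine ((tendsto_div_pow_succ_atTop_of_tendsto_deriv_div_pow hderiv hquot).comp
    tendsto_neg_atBot_atTop).congr fun t ↦ ?_
  rw [Function.comp_apply, ← div_neg_pow, neg_neg]

end LHopital

/-- if a positive solution of `Φ''' = 1/Φ³ - 1` on `(-∞, τ₀]` satisfies
`Φ → +∞`, `Φ' → -∞`, `Φ'' → +∞` as `τ → -∞`, then `Φ(τ)/τ³ → -1/6` as `τ → -∞`. -/
theorem tendsto_cubic_growth (τ₀ : ℝ) (Φ W Ψ : ℝ → ℝ)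
    (hΦpos : ∀ τ ≤ τ₀, 0 < Φ τ)
    (hΦ : ∀ τ ∈ Set.Iic τ₀, HasDerivWithinAt Φ (W τ) (Set.Iic τ₀) τ)
    (hW : ∀ τ ∈ Set.Iic τ₀, HasDerivWithinAt W (Ψ τ) (Set.Iic τ₀) τ)
    (hΨ : ∀ τ ∈ Set.Iic τ₀,
      HasDerivWithinAt Ψ (1 / (Φ τ) ^ 3 - 1) (Set.Iic τ₀) τ)
    (hΦinf : Tendsto Φ atBot atTop)
    (hWinf : Tendsto W atBot atBot)
    (hΨinf : Tendsto Ψ atBot atTop) :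
    Tendsto (fun τ => Φ τ / τ ^ 3) atBot (nhds (-(1 / 6))) := by
  have hΦ''' : Tendsto (fun τ ↦ 1 / Φ τ ^ 3 - 1) atBot (𝓝 (-1)) := by
    simpa using ((tendsto_pow_atTop three_ne_zero).comp hΦinf).inv_tendsto_atTop.sub_const 1
  have hΨ_div : Tendsto (fun τ ↦ Ψ τ / τ ^ 1) atBot (𝓝 (-1)) := by
    simpa using tendsto_div_pow_succ_atBot_of_tendsto_deriv_div_pow (n := 0)
      (eventually_hasDerivAt_atBot_of_hasDerivWithinAt_Iic hΨ) (by simpa using hΦ''')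
  have hW_div : Tendsto (fun τ ↦ W τ / τ ^ 2) atBot (𝓝 (-1 / 2)) := by
    convert tendsto_div_pow_succ_atBot_of_tendsto_deriv_div_pow
      (eventually_hasDerivAt_atBot_of_hasDerivWithinAt_Iic hW) hΨ_div using 2
    norm_num
  convert tendsto_div_pow_succ_atBot_of_tendsto_deriv_div_pow
    (eventually_hasDerivAt_atBot_of_hasDerivWithinAt_Iic hΦ) hW_div using 2
  norm_num
end
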